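/- Let G be a finite twin-free bipartite graph containing no induced Star_{1,2,3}. Then at least one of the following holds: (1) G admits a Parallel decomposition, i.e., B ∪ W can be partitioned into two nonempty sets that are nonadjacent; (2) G admits a Series decomposition, i.e., B ∪ W can be partitioned into two nonempty sets that are fully adjacent; (3) G admits a K+S decomposition, i.e., B ∪ W can be partitioned into two nonempty sets X and Y with X left adjacent to Y; (4) G is K_{1,3}-free, i.e., every vertex of G has degree at most 2; (5) the bipartite complement of G is K_{1,3}-free, i.e., every vertex of the bipartite complement has degree at most 2. -/

import Mathlib

open Finset

/-- A finite bipartite graph: black vertices `B`, white vertices `W` (disjoint finite sets),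
and an edge set `E ⊆ B × W`. -/
structure BipGraph (V : Type) [DecidableEq V] where
  B : Finset V
  W : Finset V
  disj : Disjoint B W
  E : Set (V × V)
  E_sub : ∀ e ∈ E, e.1 ∈ B ∧ e.2 ∈ W

variable {V : Type} [DecidableEq V]

/-- `(S, T)` is a biclique of `G`. -/
def IsBiclique (G : BipGraph V) (S T : Finset V) : Prop :=
  S ⊆ G.B ∧ T ⊆ G.W ∧ ∀ b ∈ S, ∀ w ∈ T, (b, w) ∈ G.E

/-- `(b, w)` is a bisize of `G`: `G` contains a biclique of size `(b, w)`. -/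
def Bisize (G : BipGraph V) (p : ℕ × ℕ) : Prop :=
  ∃ S T, IsBiclique G S T ∧ S.card = p.1 ∧ T.card = p.2

/-- `Dominates p q` : `p` dominates `q`, i.e. `q.1 ≤ p.1` and `q.2 ≤ p.2`. -/
def Dominates (p q : ℕ × ℕ) : Prop := q.1 ≤ p.1 ∧ q.2 ≤ p.2

/-- A maxbisize of `G` : a bisize not strictly dominated by another bisize. -/
def MaxBisize (G : BipGraph V) (p : ℕ × ℕ) : Prop :=
  Bisize G p ∧ ∀ q, Bisize G q → Dominates q p → q = p

/-- `DD G` is the set of maxbisizes of `G` (denoted `D(G)` in the paper). -/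
def DD (G : BipGraph V) : Set (ℕ × ℕ) := {p | MaxBisize G p}

/-- `Dom X` : the elements of `X` not strictly dominated by another element of `X`. -/
def Dom (X : Set (ℕ × ℕ)) : Set (ℕ × ℕ) := {p ∈ X | ∀ q ∈ X, Dominates q p → q = p}

/-- The induced subgraph `G[M]`. -/
def induce (G : BipGraph V) (M : Finset V) : BipGraph V where
  B := G.B ∩ M
  W := G.W ∩ M
  disj := G.disj.mono inter_subset_left inter_subset_left
  E := {e ∈ G.E | e.1 ∈ M ∧ e.2 ∈ M}
  E_sub := fun e he =>
    ⟨mem_inter.mpr ⟨(G.E_sub e he.1).1, he.2.1⟩, mem_inter.mpr ⟨(G.E_sub e he.1).2, he.2.2⟩⟩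

/-- `X` is nonadjacent to `Y` : no vertex of `X` is adjacent to a vertex of `Y`. -/
def Nonadj (G : BipGraph V) (X Y : Finset V) : Prop :=
  ∀ x ∈ X, ∀ y ∈ Y, (x, y) ∉ G.E ∧ (y, x) ∉ G.E

/-- `X` is fully adjacent to `Y` : every black vertex of `X` is adjacent to every white
vertex of `Y` and every white vertex of `X` is adjacent to every black vertex of `Y`. -/
def FullyAdj (G : BipGraph V) (X Y : Finset V) : Prop :=
  (∀ b ∈ X ∩ G.B, ∀ w ∈ Y ∩ G.W, (b, w) ∈ G.E) ∧
  (∀ b ∈ Y ∩ G.B, ∀ w ∈ X ∩ G.W, (b, w) ∈ G.E)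

/-- `X` is left adjacent to `Y` : every black vertex of `X` is adjacent to every white
vertex of `Y` and no white vertex of `X` is adjacent to a black vertex of `Y`. -/
def LeftAdj (G : BipGraph V) (X Y : Finset V) : Prop :=
  (∀ b ∈ X ∩ G.B, ∀ w ∈ Y ∩ G.W, (b, w) ∈ G.E) ∧
  (∀ b ∈ Y ∩ G.B, ∀ w ∈ X ∩ G.W, (b, w) ∉ G.E)

open Classical in
/-- `X ⊕ Y` with the convention `∅ ⊕ X = X ⊕ ∅ = X`. -/
noncomputable def oplus (X Y : Set (ℕ × ℕ)) : Set (ℕ × ℕ) :=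
  if X = ∅ then Y else if Y = ∅ then X
  else {p | ∃ x ∈ X, ∃ y ∈ Y, p = x + y}

/-- `→_w^z X`. -/
def shiftW (z : ℕ) (X : Set (ℕ × ℕ)) : Set (ℕ × ℕ) := {p | ∃ q ∈ X, p = (q.1, q.2 + z)}

/-- `→_b^z X`. -/
def shiftB (z : ℕ) (X : Set (ℕ × ℕ)) : Set (ℕ × ℕ) := {p | ∃ q ∈ X, p = (q.1 + z, q.2)}

/-- A bimodule of `G`. -/
def Bimodule (G : BipGraph V) (M : Finset V) : Prop :=
  M ⊆ G.B ∪ G.W ∧ ∀ v ∈ (G.B ∪ G.W) \ M, Nonadj G {v} M ∨ FullyAdj G {v} M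

/-- The quotient graph of `G` by a family `M` of bimodules: vertex `(i, true)` is the
black vertex `bᵢ` (present when `Mᵢ ∩ B ≠ ∅`), `(i, false)` the white vertex `wᵢ`. -/
def quotientGraph (G : BipGraph V) {k : ℕ} (M : Fin k → Finset V) :
    BipGraph (Fin k × Bool) where
  B := Finset.univ.filter fun p => p.2 = true ∧ (M p.1 ∩ G.B).Nonempty
  W := Finset.univ.filter fun p => p.2 = false ∧ (M p.1 ∩ G.W).Nonempty
  disj := by
    rw [Finset.disjoint_left]
    intro p hp hq
    simp only [Finset.mem_filter, Finset.mem_univ, true_and] at hp hq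
    rw [hp.1] at hq
    exact Bool.noConfusion hq.1
  E := {e | e.1.2 = true ∧ e.2.2 = false ∧
       ∃ x ∈ M e.1.1 ∩ G.B, ∃ y ∈ M e.2.1 ∩ G.W, (x, y) ∈ G.E}
  E_sub := fun e he => by
    obtain ⟨h1, h2, x, hx, y, hy, _⟩ := he
    constructor <;> simp only [Finset.mem_filter, Finset.mem_univ, true_and]
    · exact ⟨h1, ⟨x, hx⟩⟩
    · exact ⟨h2, ⟨y, hy⟩⟩

/-- `Rroc S` for a set `S` of vertices of the quotient graph. -/
def Rroc (G : BipGraph V) {k : ℕ} (M : Fin k → Finset V)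
    (S : Finset (Fin k × Bool)) : Finset V :=
  S.biUnion fun p => if p.2 then M p.1 ∩ G.B else M p.1 ∩ G.W

/-- `Corr S` for a set `S` of vertices of `G`. -/
def Corr (G : BipGraph V) {k : ℕ} (M : Fin k → Finset V) (C : Finset V) :
    Finset (Fin k × Bool) :=
  Finset.univ.filter fun p =>
    if p.2 then (C ∩ M p.1 ∩ G.B).Nonempty else (C ∩ M p.1 ∩ G.W).Nonempty

/-- `C` is the vertex set of a biclique of `G`. -/
def IsBicliqueVS (G : BipGraph V) (C : Finset V) : Prop :=
  ∃ S T, IsBiclique G S T ∧ S ∪ T = C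

/-- `C` is the vertex set of a maximal biclique of `G`. -/
def MaximalBicliqueVS (G : BipGraph V) (C : Finset V) : Prop :=
  IsBicliqueVS G C ∧ ∀ D, IsBicliqueVS G D → C ⊆ D → C = D

/-- `D_C(Mᵢ)`, the maxbisize set of the bimodule `Mᵢ` with respect to a maximal
biclique `C` of the quotient graph. -/
def DC (G : BipGraph V) {k : ℕ} (M : Fin k → Finset V)
    (C : Finset (Fin k × Bool)) (i : Fin k) : Set (ℕ × ℕ) :=
  if (i, true) ∈ C then
    if (i, false) ∈ C then DD (induce G (M i))
    else {((M i ∩ G.B).card, 0)}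
  else
    if (i, false) ∈ C then {(0, (M i ∩ G.W).card)}
    else ∅

/-- `f 0 ⊕ f 1 ⊕ … ⊕ f (k-1)` (with the convention that `∅` is neutral for `⊕`). -/
noncomputable def oplusFold {k : ℕ} (f : Fin k → Set (ℕ × ℕ)) : Set (ℕ × ℕ) :=
  (List.finRange k).foldr (fun i acc => oplus (f i) acc) ∅

/-- The path on `n` vertices `0, 1, …, n-1`, two-colored alternately; the black
vertices are those whose index has parity `r`. -/
def pathGraph (n r : ℕ) : BipGraph (Fin n) where
  B := Finset.univ.filter fun i => (i : ℕ) % 2 = r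
  W := Finset.univ.filter fun i => (i : ℕ) % 2 ≠ r
  disj := by
    rw [Finset.disjoint_left]
    intro i hi hj
    simp only [Finset.mem_filter, Finset.mem_univ, true_and] at hi hj
    exact hj hi
  E := {e | (e.1 : ℕ) % 2 = r ∧ ((e.1 : ℕ) + 1 = (e.2 : ℕ) ∨ (e.2 : ℕ) + 1 = (e.1 : ℕ))}
  E_sub := fun e he => by
    obtain ⟨h1, h2⟩ := he
    refine ⟨?_, ?_⟩ <;> simp only [Finset.mem_filter, Finset.mem_univ, true_and]
    · exact h1
    · omega

/-- The cycle on `n` vertices `0, 1, …, n-1` (consecutive vertices modulo `n` adjacent),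
two-colored alternately; the black vertices are those whose index has parity `r`. -/
def cycleGraph (n r : ℕ) : BipGraph (Fin n) where
  B := Finset.univ.filter fun i => (i : ℕ) % 2 = r
  W := Finset.univ.filter fun i => (i : ℕ) % 2 ≠ r
  disj := by
    rw [Finset.disjoint_left]
    intro i hi hj
    simp only [Finset.mem_filter, Finset.mem_univ, true_and] at hi hj
    exact hj hi
  E := {e | (e.1 : ℕ) % 2 = r ∧ (e.2 : ℕ) % 2 ≠ r ∧
       (((e.1 : ℕ) + 1) % n = (e.2 : ℕ) ∨ ((e.2 : ℕ) + 1) % n = (e.1 : ℕ))}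
  E_sub := fun e he => by
    obtain ⟨h1, h2, _⟩ := he
    refine ⟨?_, ?_⟩ <;> simp only [Finset.mem_filter, Finset.mem_univ, true_and]
    · exact h1
    · exact h2

/-- The bipartite complement of `G`. -/
def bipCompl (G : BipGraph V) : BipGraph V where
  B := G.B
  W := G.W
  disj := G.disj
  E := {e | e.1 ∈ G.B ∧ e.2 ∈ G.W ∧ e ∉ G.E}
  E_sub := fun _ he => ⟨he.1, he.2.1⟩

/-- `x` and `y` are adjacent in `G`. -/
def Adjv (G : BipGraph V) (x y : V) : Prop := (x, y) ∈ G.E ∨ (y, x) ∈ G.E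

/-- `G` is twin-free: no two distinct vertices have the same set of neighbors. -/
def TwinFree (G : BipGraph V) : Prop :=
  ∀ x ∈ G.B ∪ G.W, ∀ y ∈ G.B ∪ G.W,
    ({z | Adjv G x z} = {z | Adjv G y z}) → x = y

/-- The edges of the skew star `Star_{1,2,3}`: a path `0-1-2-3-4-5` plus a vertex `6`
adjacent only to `2`. -/
def starEdges : List (ℕ × ℕ) := [(0, 1), (1, 2), (2, 3), (3, 4), (4, 5), (2, 6)]

/-- `G` contains no induced `Star_{1,2,3}`. -/
def Star123Free (G : BipGraph V) : Prop :=
  ¬ ∃ v : Fin 7 → V, Function.Injective v ∧ (∀ i, v i ∈ G.B ∪ G.W) ∧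
    ∀ i j : Fin 7, Adjv G (v i) (v j) ↔
      (((i : ℕ), (j : ℕ)) ∈ starEdges ∨ ((j : ℕ), (i : ℕ)) ∈ starEdges)

/-- Every vertex of `G` has degree at most 2 (equivalent to `K_{1,3}`-freeness for
bipartite graphs). -/
def MaxDeg2 (G : BipGraph V) : Prop :=
  ∀ x ∈ G.B ∪ G.W, ({y | Adjv G x y}).ncard ≤ 2

/-!
A bimodule is a vertex set to which every outside vertex is complete or anticomplete, and in which
some black and some white vertex each distinguish two vertices of the opposite colour. In a graph
without induced skew stars, a proper bimodule yields a decomposition: the traces of the edges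
anticomplete to it on the vertices complete to it form a chain, and an edge with least trace cuts
off a parallel or K+S part, in the graph or in its bipartite complement.

It remains to find bimodules. An induced path on eight vertices, or on seven if none on eight
exists, is seen by the other vertices in only a few ways. Consequently the union of all such paths
having the same complete vertices is a bimodule that induces a graph of maximum degree two; if it
is not proper, then the whole graph has maximum degree two. Once these paths are excluded, in the
bipartite complement as well, an induced disjoint union of a path on four vertices and an edge
generates a bimodule, and failing that so does an induced matching of two edges. Without such
matchings the neighbourhoods form a chain, and the largest of them gives a decomposition.
-/

namespace BipRel

variable {α β : Type*} {E : α → β → Prop}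

/-- The induced skew star with centre `v₃ : α`: the path `v₁ v₂ v₃ v₄ v₅ v₆` together with a
vertex `v₇` adjacent only to `v₃`. -/
def IsSkewStar (E : α → β → Prop) (v₁ : α) (v₂ : β) (v₃ : α) (v₄ : β) (v₅ : α) (v₆ v₇ : β) :
    Prop :=
  E v₁ v₂ ∧ E v₃ v₂ ∧ E v₃ v₄ ∧ E v₅ v₄ ∧ E v₅ v₆ ∧ E v₃ v₇ ∧
    ¬E v₁ v₄ ∧ ¬E v₁ v₆ ∧ ¬E v₁ v₇ ∧ ¬E v₃ v₆ ∧ ¬E v₅ v₂ ∧ ¬E v₅ v₇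

/-- No induced skew star, whatever the colour of its centre. A bipartite graph is viewed as a
relation `E : α → β → Prop` between its black and its white vertices; exchanging the colours is
`flip E`, and the bipartite complement is the pointwise complement `Eᶜ`. -/
def SkewStarFree (E : α → β → Prop) : Prop :=
  (∀ v₁ v₂ v₃ v₄ v₅ v₆ v₇, ¬IsSkewStar E v₁ v₂ v₃ v₄ v₅ v₆ v₇) ∧
    ∀ v₁ v₂ v₃ v₄ v₅ v₆ v₇, ¬IsSkewStar (flip E) v₁ v₂ v₃ v₄ v₅ v₆ v₇

/-- Distinct vertices of the same colour have distinct neighbourhoods. -/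
def NoTwins (E : α → β → Prop) : Prop :=
  Function.Injective E ∧ Function.Injective (flip E)

/-- Every vertex has degree at most two. -/
def MaxDegTwo (E : α → β → Prop) : Prop :=
  (∀ a, {c | E a c}.encard ≤ 2) ∧ ∀ c, {a | E a c}.encard ≤ 2

/-- The vertex set `A ∪ C` is neither empty nor everything. -/
def IsProperPart (A : Set α) (C : Set β) : Prop :=
  (A.Nonempty ∨ C.Nonempty) ∧ (Aᶜ.Nonempty ∨ Cᶜ.Nonempty)

/-- No edge joins `A ∪ C` to the other vertices. -/
def IsParallelPart (E : α → β → Prop) (A : Set α) (C : Set β) : Prop :=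
  ∀ a c, E a c → (a ∈ A ↔ c ∈ C)

/-- `A ∪ C` is left adjacent to the set of the other vertices. -/
def IsLeftPart (E : α → β → Prop) (A : Set α) (C : Set β) : Prop :=
  (∀ a ∈ A, ∀ c ∉ C, E a c) ∧ ∀ a ∉ A, ∀ c ∈ C, ¬E a c

/-- There is a parallel, series or K+S decomposition; a series decomposition is a parallel
decomposition of the bipartite complement. -/
def Decomposes (E : α → β → Prop) : Prop :=
  ∃ A C, IsProperPart A C ∧ (IsParallelPart E A C ∨ IsParallelPart Eᶜ A C ∨ IsLeftPart E A C)

theorem SkewStarFree.flip (hS : SkewStarFree E) : SkewStarFree (flip E) :=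
  hS.symm

theorem IsSkewStar.of_compl {v₁ v₃ v₅ : α} {v₂ v₄ v₆ v₇ : β}
    (h : IsSkewStar Eᶜ v₁ v₂ v₃ v₄ v₅ v₆ v₇) : IsSkewStar E v₃ v₆ v₁ v₇ v₅ v₂ v₄ := by
  simp only [IsSkewStar, Pi.compl_apply, compl_iff_not, not_not] at h ⊢
  tauto

theorem SkewStarFree.compl (hS : SkewStarFree E) : SkewStarFree Eᶜ :=
  ⟨fun _ _ _ _ _ _ _ h => hS.1 _ _ _ _ _ _ _ h.of_compl,
    fun _ _ _ _ _ _ _ h => hS.2 _ _ _ _ _ _ _ (IsSkewStar.of_compl (E := _root_.flip E) h)⟩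

theorem NoTwins.flip (hT : NoTwins E) : NoTwins (flip E) :=
  hT.symm

theorem NoTwins.compl (hT : NoTwins E) : NoTwins Eᶜ :=
  ⟨compl_injective.comp hT.1, compl_injective.comp hT.2⟩

theorem NoTwins.white_eq (hT : NoTwins E) {z z' : β} (h : ∀ a, E a z ↔ E a z') : z = z' :=
  hT.2 (funext fun a => propext (h a))

theorem MaxDegTwo.of_flip (h : MaxDegTwo (flip E)) : MaxDegTwo E :=
  h.symm

theorem IsProperPart.symm {A : Set α} {C : Set β} (h : IsProperPart A C) : IsProperPart C A :=
  h.imp Or.symm Or.symm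

theorem IsProperPart.compl {A : Set α} {C : Set β} (h : IsProperPart A C) : IsProperPart Aᶜ Cᶜ :=
  ⟨h.2, by simpa only [compl_compl] using h.1⟩

theorem IsLeftPart.compl {A : Set α} {C : Set β} (h : IsLeftPart E A C) :
    IsLeftPart Eᶜ Aᶜ Cᶜ :=
  ⟨fun a ha c hc => h.2 a ha c (not_not.1 hc),
    fun a ha c hc hn => hn (h.1 a (not_not.1 ha) c hc)⟩

theorem Decomposes.of_compl (h : Decomposes Eᶜ) : Decomposes E := by
  obtain ⟨A, C, hp, h | h | h⟩ := h
  · exact ⟨A, C, hp, .inr (.inl h)⟩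
  · exact ⟨A, C, hp, .inl (compl_compl E ▸ h)⟩
  · exact ⟨Aᶜ, Cᶜ, hp.compl, .inr (.inr (compl_compl E ▸ h.compl))⟩

theorem Decomposes.of_flip (h : Decomposes (flip E)) : Decomposes E := by
  obtain ⟨C, A, hp, h | h | h⟩ := h
  · exact ⟨A, C, hp.symm, .inl fun a c hac => (h c a hac).symm⟩
  · exact ⟨A, C, hp.symm, .inr (.inl fun a c hac => (h c a hac).symm)⟩
  · exact ⟨Aᶜ, Cᶜ, hp.symm.compl, .inr (.inr
      ⟨fun a ha c hc => h.1 c (not_not.1 hc) a ha, fun a ha c hc => h.2 c hc a (not_not.1 ha)⟩)⟩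

/-! ### Bimodules -/

/-- Every vertex outside `A ∪ C` is adjacent to all or to none of the vertices of the opposite
colour in `A ∪ C`, while each colour class contains a vertex separating two elements of the
other. -/
structure IsBimodule (E : α → β → Prop) (A : Set α) (C : Set β) : Prop where
  black_hom : ∀ a ∉ A, (∀ c ∈ C, E a c) ∨ ∀ c ∈ C, ¬E a c
  white_hom : ∀ c ∉ C, (∀ a ∈ A, E a c) ∨ ∀ a ∈ A, ¬E a c
  black_mixed : ∃ b ∈ A, ∃ x ∈ C, ∃ y ∈ C, E b x ∧ ¬E b y
  white_mixed : ∃ x ∈ C, ∃ b ∈ A, ∃ b' ∈ A, E b x ∧ ¬E b' x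

/-- The black vertices outside `A ∪ C` adjacent to all of `C`. The white ones adjacent to all of
`A` are `near (flip E) C A`. -/
def near (E : α → β → Prop) (A : Set α) (C : Set β) : Set α :=
  {a | a ∉ A ∧ ∀ c ∈ C, E a c}

/-- The black vertices outside `A ∪ C` adjacent to no vertex of `C`. The white ones adjacent to
no vertex of `A` are `far (flip E) C A`. -/
def far (E : α → β → Prop) (A : Set α) (C : Set β) : Set α :=
  {a | a ∉ A ∧ ∀ c ∈ C, ¬E a c}

/-- The neighbours of the edge `e d` among the vertices complete to `A ∪ C`. -/
def nearNbhd (E : α → β → Prop) (A : Set α) (C : Set β) (e : α) (d : β) : Set α × Set β :=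
  ({f ∈ near E A C | E f d}, {g ∈ near (flip E) C A | E e g})

/-- An edge between vertices anticomplete to `A ∪ C`. -/
structure IsFarEdge (E : α → β → Prop) (A : Set α) (C : Set β) (e : α) (d : β) : Prop where
  black : e ∈ far E A C
  white : d ∈ far (flip E) C A
  adj : E e d

/-- A far edge whose near neighbours are near neighbours of every far edge. -/
structure IsLeastFarEdge (E : α → β → Prop) (A : Set α) (C : Set β) (e₀ : α) (d₀ : β) : Prop
    extends IsFarEdge E A C e₀ d₀ where
  adj_white : ∀ e d, IsFarEdge E A C e d → ∀ g ∈ near (flip E) C A, E e₀ g → E e g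
  adj_black : ∀ e d, IsFarEdge E A C e d → ∀ f ∈ near E A C, E f d₀ → E f d

variable {A : Set α} {C : Set β}

theorem far_compl (E : α → β → Prop) (A : Set α) (C : Set β) : far Eᶜ A C = near E A C := by
  simp [far, near]

theorem IsFarEdge.flip {e : α} {d : β} (h : IsFarEdge E A C e d) :
    IsFarEdge (flip E) C A d e :=
  ⟨h.white, h.black, h.adj⟩

theorem IsLeastFarEdge.flip {e₀ : α} {d₀ : β} (h : IsLeastFarEdge E A C e₀ d₀) :
    IsLeastFarEdge (flip E) C A d₀ e₀ :=
  ⟨h.toIsFarEdge.flip, fun d e hed => h.adj_black e d hed.flip,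
    fun d e hed => h.adj_white e d hed.flip⟩

theorem isFarEdge_compl {f : α} {g : β} (hf : f ∈ near E A C) (hg : g ∈ near (flip E) C A)
    (hfg : ¬E f g) : IsFarEdge Eᶜ A C f g :=
  ⟨by rwa [far_compl], by rw [← far_compl] at hg; exact hg, hfg⟩

namespace IsBimodule

protected theorem flip (hM : IsBimodule E A C) : IsBimodule (flip E) C A :=
  ⟨hM.white_hom, hM.black_hom, hM.white_mixed, hM.black_mixed⟩

protected theorem compl (hM : IsBimodule E A C) : IsBimodule Eᶜ A C where
  black_hom a ha := (hM.black_hom a ha).symm.imp id fun h c hc hn => hn (h c hc)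
  white_hom c hc := (hM.white_hom c hc).symm.imp id fun h a ha hn => hn (h a ha)
  black_mixed :=
    let ⟨b, hb, x, hx, y, hy, hbx, hby⟩ := hM.black_mixed
    ⟨b, hb, y, hy, x, hx, hby, not_not_intro hbx⟩
  white_mixed :=
    let ⟨x, hx, b, hb, b', hb', hbx, hbx'⟩ := hM.white_mixed
    ⟨x, hx, b', hb', b, hb, hbx', not_not_intro hbx⟩

theorem mem_or_near_or_far (hM : IsBimodule E A C) (a : α) :
    a ∈ A ∨ a ∈ near E A C ∨ a ∈ far E A C :=
  or_iff_not_imp_left.2 fun ha => (hM.black_hom a ha).imp (⟨ha, ·⟩) (⟨ha, ·⟩)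

theorem near_adj_of_common_far_nbr (hM : IsBimodule E A C) (hS : SkewStarFree E) {f e : α}
    {d d' : β} (hf : f ∈ near E A C) (hed : IsFarEdge E A C e d) (hed' : IsFarEdge E A C e d')
    (hfd : E f d) : E f d' := by
  by_contra hfd'
  obtain ⟨b, hb, x, hx, y, hy, hbx, hby⟩ := hM.black_mixed
  exact hS.1 b x f d e d' y ⟨hbx, hf.2 x hx, hfd, hed.adj, hed'.adj, hf.2 y hy, hed.white.2 b hb,
    hed'.white.2 b hb, hby, hfd', hed.black.2 x hx, hed.black.2 y hy⟩

theorem far_adj_of_near_not_adj (hM : IsBimodule E A C) (hS : SkewStarFree E) {f e : α} {d g : β}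
    (hf : f ∈ near E A C) (hg : g ∈ near (flip E) C A) (hed : IsFarEdge E A C e d)
    (hfg : ¬E f g) (hfd : E f d) : E e g := by
  by_contra heg
  obtain ⟨b, hb, x, hx, y, hy, hbx, hby⟩ := hM.black_mixed
  exact hS.1 e d f x b g y ⟨hed.adj, hfd, hf.2 x hx, hbx, hg.2 b hb, hf.2 y hy, hed.black.2 x hx,
    heg, hed.black.2 y hy, hfg, hed.white.2 b hb, hby⟩

theorem near_white_nested (hM : IsBimodule E A C) (hS : SkewStarFree E) {e e' : α} {d g h : β}
    (hed : IsFarEdge E A C e d) (he' : e' ∈ far E A C) (hg : g ∈ near (flip E) C A)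
    (hh : h ∈ near (flip E) C A) (heg : E e g) (heh : ¬E e h) (he'h : E e' h) : E e' g := by
  by_contra he'g
  have he'd : ¬E e' d := fun he'd =>
    he'g (hM.flip.near_adj_of_common_far_nbr hS.flip hg hed.flip ⟨hed.white, he', he'd⟩ heg)
  obtain ⟨b, hb, x, hx, -, -, hbx, -⟩ := hM.black_mixed
  exact hS.1 e' h b g e d x ⟨he'h, hh.2 b hb, hg.2 b hb, heg, hed.adj, hbx, he'g, he'd,
    he'.2 x hx, hed.white.2 b hb, heh, hed.black.2 x hx⟩

theorem near_black_white_nested (hM : IsBimodule E A C) (hS : SkewStarFree E) {e e' f : α}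
    {d d' g : β} (hed : IsFarEdge E A C e d) (hed' : IsFarEdge E A C e' d')
    (hf : f ∈ near E A C) (hg : g ∈ near (flip E) C A)
    (hfd : E f d) (hfd' : ¬E f d') (he'g : E e' g) : E e g := by
  by_contra heg
  have hfg : E f g := by
    by_contra hfg
    exact heg (hM.far_adj_of_near_not_adj hS hf hg hed hfg hfd)
  have hcross : ¬E e d' := fun h =>
    hfd' (hM.near_adj_of_common_far_nbr hS hf hed ⟨hed.black, hed'.white, h⟩ hfd)
  have hcross' : ¬E e' d := fun h =>
    hfd' (hM.near_adj_of_common_far_nbr hS hf ⟨hed'.black, hed.white, h⟩ hed' hfd)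
  obtain ⟨b, hb, -⟩ := hM.black_mixed
  exact hS.2 d' e' g f d e b ⟨hed'.adj, he'g, hfg, hfd, hed.adj, hg.2 b hb, hfd', hcross,
    hed'.white.2 b hb, heg, hcross', hed.white.2 b hb⟩

theorem nearNbhd_total (hM : IsBimodule E A C) (hS : SkewStarFree E) {e e' : α} {d d' : β}
    (hed : IsFarEdge E A C e d) (hed' : IsFarEdge E A C e' d') :
    nearNbhd E A C e d ≤ nearNbhd E A C e' d' ∨ nearNbhd E A C e' d' ≤ nearNbhd E A C e d := by
  by_contra! ⟨h, h'⟩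
  rw [Prod.le_def, not_and_or] at h h'
  obtain h | h := h <;> obtain h' | h' := h' <;>
    obtain ⟨x, ⟨hx, hxd⟩, hx'⟩ := Set.not_subset.1 h <;>
    obtain ⟨y, ⟨hy, hyd⟩, hy'⟩ := Set.not_subset.1 h'
  · exact hx' ⟨hx, hM.flip.near_white_nested hS.flip hed.flip hed'.white hx hy hxd
      (fun h => hy' ⟨hy, h⟩) hyd⟩
  · exact hy' ⟨hy, hM.near_black_white_nested hS hed hed' hx hy hxd (fun h => hx' ⟨hx, h⟩) hyd⟩
  · exact hx' ⟨hx, hM.near_black_white_nested hS hed' hed hy hx hyd (fun h => hy' ⟨hy, h⟩) hxd⟩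
  · exact hx' ⟨hx, hM.near_white_nested hS hed hed'.black hx hy hxd (fun h => hy' ⟨hy, h⟩) hyd⟩

theorem exists_isLeastFarEdge [Finite α] [Finite β] (hM : IsBimodule E A C)
    (hS : SkewStarFree E) {e : α} {d : β} (hed : IsFarEdge E A C e d) :
    ∃ e₀ d₀, IsLeastFarEdge E A C e₀ d₀ := by
  obtain ⟨⟨e₀, d₀⟩, hmem, hmin⟩ := Set.Finite.exists_minimalFor
    (fun p : α × β => nearNbhd E A C p.1 p.2) {p | IsFarEdge E A C p.1 p.2} (Set.toFinite _)
    ⟨(e, d), hed⟩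
  have hle : ∀ e d, IsFarEdge E A C e d → nearNbhd E A C e₀ d₀ ≤ nearNbhd E A C e d :=
    fun e d hed => (hM.nearNbhd_total hS hmem hed).elim id (@hmin (e, d) hed)
  exact ⟨e₀, d₀, hmem, fun e d hed g hg h => ((hle e d hed).2 ⟨hg, h⟩).2,
    fun e d hed f hf h => ((hle e d hed).1 ⟨hf, h⟩).2⟩

theorem decomposes_of_white_near_nbr (hM : IsBimodule E A C) (hS : SkewStarFree E) {e₀ : α}
    {d₀ g₀ : β} (h₀ : IsLeastFarEdge E A C e₀ d₀)
    (hcomplete : ∀ g ∈ near (flip E) C A, E e₀ g → ∀ f ∈ near E A C, E f g)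
    (hg₀ : g₀ ∈ near (flip E) C A) (heg₀ : E e₀ g₀) : Decomposes E := by
  let N : Set β := {g ∈ near (flip E) C A | E e₀ g}
  let D : Set α := {a ∈ far E A C | (∀ d ∈ far (flip E) C A, ¬E a d) ∧
    ∀ g ∈ near (flip E) C A, E a g → E e₀ g}
  have hcomplete_N : ∀ a ∉ D, ∀ g ∈ N, E a g := by
    intro a ha g hg
    obtain haA | hnear | hfar := hM.mem_or_near_or_far a
    · exact hg.1.2 a haA
    · exact hcomplete g hg.1 hg.2 a hnear
    · by_contra hag
      refine ha ⟨hfar, fun d hd had => ?_, fun h hh hah => ?_⟩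
      · exact hag (h₀.adj_white a d ⟨hfar, hd, had⟩ g hg.1 hg.2)
      · by_contra heh
        exact hag (hM.near_white_nested hS h₀.toIsFarEdge hfar hg.1 hh hg.2 heh hah)
  have hanticomplete : ∀ a ∈ D, ∀ c ∉ N, ¬E a c := by
    intro a ⟨hfar, hd, hg⟩ c hc hac
    obtain hcC | hnear | hfar' := hM.flip.mem_or_near_or_far c
    · exact hfar.2 c hcC hac
    · exact hc ⟨hnear, hg c hnear hac⟩
    · exact hd c hfar' hac
  obtain ⟨b, hb, -⟩ := hM.black_mixed
  exact ⟨Dᶜ, Nᶜ, ⟨.inl ⟨b, fun h => h.1.1 hb⟩, .inr ⟨g₀, not_not_intro ⟨hg₀, heg₀⟩⟩⟩,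
    .inr (.inr ⟨fun a ha c hc => hcomplete_N a ha c (not_not.1 hc),
      fun a ha => hanticomplete a (not_not.1 ha)⟩)⟩

theorem isFarEdge_of_nearNbhd_eq_empty (hM : IsBimodule E A C) (hS : SkewStarFree E) {e : α}
    {d c : β} (hed : IsFarEdge E A C e d) (h : nearNbhd E A C e d = (∅, ∅)) (hec : E e c) :
    IsFarEdge E A C e c ∧ nearNbhd E A C e c = (∅, ∅) := by
  simp only [nearNbhd, Prod.mk.injEq, Set.sep_eq_empty_iff_mem_false] at h ⊢
  obtain hcC | hnear | hfar := hM.flip.mem_or_near_or_far c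
  · exact absurd hec (hed.black.2 c hcC)
  · exact absurd hec (h.2 c hnear)
  · have hedc : IsFarEdge E A C e c := ⟨hed.black, hfar, hec⟩
    exact ⟨hedc, fun f hf hfc => h.1 f hf (hM.near_adj_of_common_far_nbr hS hf hedc hed hfc), h.2⟩

theorem decomposes_of_nearNbhd_eq_empty (hM : IsBimodule E A C) (hS : SkewStarFree E) {e₀ : α}
    {d₀ : β} (h₀ : IsFarEdge E A C e₀ d₀) (h : nearNbhd E A C e₀ d₀ = (∅, ∅)) :
    Decomposes E := by
  let P : α → β → Prop := fun e d => IsFarEdge E A C e d ∧ nearNbhd E A C e d = (∅, ∅)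
  have hP_flip : ∀ {e d}, P e d →
      IsFarEdge (_root_.flip E) C A d e ∧ nearNbhd (_root_.flip E) C A d e = (∅, ∅) :=
    fun ⟨hed, hempty⟩ => ⟨hed.flip, congrArg Prod.swap hempty⟩
  obtain ⟨b, hb, -⟩ := hM.black_mixed
  refine ⟨{e | ∃ d, P e d}, {d | ∃ e, P e d}, ⟨.inl ⟨e₀, d₀, h₀, h⟩, .inl ⟨b, ?_⟩⟩,
    .inl fun a c hac => ⟨?_, ?_⟩⟩
  · rintro ⟨d, hbd, -⟩
    exact hbd.black.1 hb
  · rintro ⟨d, had, hempty⟩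
    exact ⟨a, hM.isFarEdge_of_nearNbhd_eq_empty hS had hempty hac⟩
  · rintro ⟨e, hec⟩
    have ⟨hca, hempty⟩ := hM.flip.isFarEdge_of_nearNbhd_eq_empty hS.flip (hP_flip hec).1
      (hP_flip hec).2 hac
    exact ⟨c, hca.flip, congrArg Prod.swap hempty⟩

theorem decomposes_of_isLeastFarEdge (hM : IsBimodule E A C) (hS : SkewStarFree E) {e₀ : α}
    {d₀ : β} (h₀ : IsLeastFarEdge E A C e₀ d₀)
    (hcross : ∀ f ∈ near E A C, ∀ g ∈ near (flip E) C A, E e₀ g ∨ E f d₀ → E f g) :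
    Decomposes E := by
  by_cases hwhite : ∃ g ∈ near (_root_.flip E) C A, E e₀ g
  · obtain ⟨g, hg, heg⟩ := hwhite
    exact hM.decomposes_of_white_near_nbr hS h₀ (fun g hg heg f hf => hcross f hf g hg (.inl heg))
      hg heg
  by_cases hblack : ∃ f ∈ near E A C, E f d₀
  · obtain ⟨f, hf, hfd⟩ := hblack
    exact (hM.flip.decomposes_of_white_near_nbr hS.flip h₀.flip
      (fun f hf hfd g hg => hcross f hf g hg (.inr hfd)) hf hfd).of_flip
  · push Not at hwhite hblack
    refine hM.decomposes_of_nearNbhd_eq_empty hS h₀.toIsFarEdge ?_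
    simp only [nearNbhd, Prod.mk.injEq, Set.sep_eq_empty_iff_mem_false]
    exact ⟨hblack, hwhite⟩

theorem decomposes_of_isFarEdge [Finite α] [Finite β] (hM : IsBimodule E A C)
    (hS : SkewStarFree E) {e : α} {d : β} (hed : IsFarEdge E A C e d) : Decomposes E := by
  obtain ⟨e₀, d₀, h₀⟩ := hM.exists_isLeastFarEdge hS hed
  by_contra hdec
  obtain ⟨f, hf, g, hg, hor, hfg⟩ : ∃ f ∈ near E A C, ∃ g ∈ near (_root_.flip E) C A,
      (E e₀ g ∨ E f d₀) ∧ ¬E f g := by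
    by_contra! hcross
    exact hdec (hM.decomposes_of_isLeastFarEdge hS h₀ hcross)
  have hboth : E e₀ g ∧ E f d₀ := by
    obtain heg | hfd := hor
    · exact ⟨heg,
        hM.flip.far_adj_of_near_not_adj hS.flip hg hf h₀.toIsFarEdge.flip hfg heg⟩
    · exact ⟨hM.far_adj_of_near_not_adj hS hf hg h₀.toIsFarEdge hfg hfd, hfd⟩
  have hfg' : IsFarEdge Eᶜ A C f g := isFarEdge_compl hf hg hfg
  obtain ⟨f₁, g₁, h₁⟩ := hM.compl.exists_isLeastFarEdge hS.compl hfg'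
  refine hdec (hM.compl.decomposes_of_isLeastFarEdge hS.compl h₁ ?_).of_compl
  intro e he d hd hor' hed
  have hed : IsFarEdge E A C e d := ⟨he, hd, hed⟩
  obtain h | h := hor'
  · exact h₁.adj_white f g hfg' d hd h (h₀.adj_black e d hed f hf hboth.2)
  · exact h₁.adj_black f g hfg' e he h (h₀.adj_white e d hed g hg hboth.1)

theorem isLeftPart_near (hM : IsBimodule E A C) (hfar : ∀ e d, ¬IsFarEdge E A C e d)
    (hnear : ∀ f ∈ near E A C, ∀ g ∈ near (flip E) C A, E f g) :
    IsLeftPart E (near E A C) (far (flip E) C A) := by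
  refine ⟨fun a ha c hc => ?_, fun a ha c hc hac => ?_⟩
  · obtain h | h | h := hM.flip.mem_or_near_or_far c
    · exact ha.2 c h
    · exact hnear a ha c h
    · exact absurd h hc
  · obtain h | h | h := hM.mem_or_near_or_far a
    · exact hc.2 a h hac
    · exact ha h
    · exact hfar a c ⟨h, hc, hac⟩

theorem decomposes [Finite α] [Finite β] (hM : IsBimodule E A C) (hS : SkewStarFree E)
    (hproper : Aᶜ.Nonempty ∨ Cᶜ.Nonempty) : Decomposes E := by
  by_contra hdec
  have hfar : ∀ e d, ¬IsFarEdge E A C e d := fun e d hed =>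
    hdec (hM.decomposes_of_isFarEdge hS hed)
  have hnear : ∀ f ∈ near E A C, ∀ g ∈ near (_root_.flip E) C A, E f g := by
    intro f hf g hg
    by_contra hfg
    exact hdec (hM.compl.decomposes_of_isFarEdge hS.compl (isFarEdge_compl hf hg hfg)).of_compl
  obtain ⟨b, hb, x, hx, -⟩ := hM.black_mixed
  have hno_left : ¬((near E A C).Nonempty ∨ (far (_root_.flip E) C A).Nonempty) := fun hne =>
    hdec ⟨_, _, ⟨hne, .inl ⟨b, fun h => h.1 hb⟩⟩, .inr (.inr (hM.isLeftPart_near hfar hnear))⟩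
  have hflip := hM.flip.isLeftPart_near (fun d e h => hfar e d h.flip)
    fun g hg f hf => hnear f hf g hg
  refine hdec (Decomposes.of_flip ⟨_, _, ⟨?_, .inl ⟨x, fun h => h.1 hx⟩⟩, .inr (.inr hflip)⟩)
  obtain ⟨a, ha⟩ | ⟨c, hc⟩ := hproper
  · exact .inr ⟨a, ((hM.mem_or_near_or_far a).resolve_left ha).resolve_left
      (hno_left <| .inl ⟨a, ·⟩)⟩
  · exact .inl ⟨c, ((hM.flip.mem_or_near_or_far c).resolve_left hc).resolve_right
      (hno_left <| .inr ⟨c, ·⟩)⟩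

end IsBimodule

/-! ### Block systems -/

/-- The white vertex `z` is adjacent to every vertex of `A`; for a black vertex `y` and a set `C`
of white vertices write `Complete (flip E) C y`. -/
def Complete (E : α → β → Prop) (A : Set α) (z : β) : Prop :=
  ∀ a ∈ A, E a z

/-- `A ∪ C` and `A' ∪ C'` have the same complete vertices. -/
def SameComplete (E : α → β → Prop) (A : Set α) (C : Set β) (A' : Set α) (C' : Set β) : Prop :=
  Complete E A = Complete E A' ∧ Complete (flip E) C = Complete (flip E) C'

/-- The white half of the conditions on a family `𝓑` of vertex sets `A ∪ C`, the blocks, under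
which the union of all blocks having the same complete vertices as a given one is a bimodule
inducing a graph of maximum degree two. -/
structure WhiteBlockSystem (E : α → β → Prop) (𝓑 : Set α → Set β → Prop) : Prop where
  complete_or_anticomplete_or_mem : ∀ A C, 𝓑 A C → ∀ z, Complete E A z ∨ Complete Eᶜ A z ∨
    ∃ A' C', 𝓑 A' C' ∧ SameComplete E A C A' C' ∧ z ∈ C'
  not_complete : ∀ A C, 𝓑 A C → ∀ z ∈ C, ¬Complete E A z ∧ ¬Complete Eᶜ A z
  encard_nbrs_le : ∀ A C, 𝓑 A C → ∀ a ∈ A, {z | E a z ∧ ¬Complete E A z}.encard ≤ 2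

/-- The white vertices of the blocks with the same complete vertices as `A ∪ C`; the black ones
are `blockUnion (flip E) (flip 𝓑) C A`. -/
def blockUnion (E : α → β → Prop) (𝓑 : Set α → Set β → Prop) (A : Set α) (C : Set β) : Set β :=
  {z | ∃ A' C', 𝓑 A' C' ∧ SameComplete E A C A' C' ∧ z ∈ C'}

theorem SameComplete.flip {A' : Set α} {C' : Set β} (h : SameComplete E A C A' C') :
    SameComplete (flip E) C A C' A' :=
  h.symm

theorem mem_blockUnion {𝓑 : Set α → Set β → Prop} (hAC : 𝓑 A C) {z : β} (hz : z ∈ C) :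
    z ∈ blockUnion E 𝓑 A C :=
  ⟨A, C, hAC, ⟨rfl, rfl⟩, hz⟩

theorem mem_blockUnion_flip {𝓑 : Set α → Set β → Prop} {y : α} :
    y ∈ blockUnion (flip E) (flip 𝓑) C A ↔
      ∃ A' C', 𝓑 A' C' ∧ SameComplete E A C A' C' ∧ y ∈ A' :=
  ⟨fun ⟨C', A', h, hs, hy⟩ => ⟨A', C', h, hs.flip, hy⟩,
    fun ⟨A', C', h, hs, hy⟩ => ⟨C', A', h, hs.flip, hy⟩⟩

namespace WhiteBlockSystem

variable {𝓑 : Set α → Set β → Prop}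

theorem hom_of_notMem (h : WhiteBlockSystem E 𝓑) {z : β}
    (hz : z ∉ blockUnion E 𝓑 A C) :
    (∀ y ∈ blockUnion (flip E) (flip 𝓑) C A, E y z) ∨
      ∀ y ∈ blockUnion (flip E) (flip 𝓑) C A, ¬E y z := by
  have hblock : ∀ A' C', 𝓑 A' C' → SameComplete E A C A' C' →
      Complete E A' z ∨ Complete Eᶜ A' z := by
    intro A' C' h' hs
    obtain hc | hc | ⟨A'', C'', h'', hs', hmem⟩ :=
      h.complete_or_anticomplete_or_mem A' C' h' z
    · exact .inl hc
    · exact .inr hc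
    · exact absurd ⟨A'', C'', h'', ⟨hs.1.trans hs'.1, hs.2.trans hs'.2⟩, hmem⟩ hz
  by_cases hc : Complete E A z
  · refine .inl fun y hy => ?_
    obtain ⟨A', C', -, hs, hyA'⟩ := mem_blockUnion_flip.1 hy
    exact (hs.1 ▸ hc : Complete E A' z) y hyA'
  · refine .inr fun y hy => ?_
    obtain ⟨A', C', h', hs, hyA'⟩ := mem_blockUnion_flip.1 hy
    exact (hblock A' C' h' hs).resolve_left (hs.1 ▸ hc) y hyA'

theorem exists_nbr_nonnbr (h : WhiteBlockSystem E 𝓑) (hAC : 𝓑 A C) {z : β} (hz : z ∈ C) :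
    ∃ b ∈ A, ∃ b' ∈ A, E b z ∧ ¬E b' z := by
  obtain ⟨hcomplete, hanti⟩ := h.not_complete A C hAC z hz
  simp only [Complete, Pi.compl_apply, compl_iff_not, not_forall, not_not] at hcomplete hanti
  obtain ⟨b', hb', hb'z⟩ := hcomplete
  obtain ⟨b, hb, hbz⟩ := hanti
  exact ⟨b, hb, b', hb', hbz, hb'z⟩

theorem isBimodule_blockUnion (hW : WhiteBlockSystem E 𝓑)
    (hB : WhiteBlockSystem (flip E) (flip 𝓑)) (hAC : 𝓑 A C) (hC : C.Nonempty) :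
    IsBimodule E (blockUnion (flip E) (flip 𝓑) C A) (blockUnion E 𝓑 A C) := by
  obtain ⟨z, hz⟩ := hC
  obtain ⟨b, hb, b', hb', hbz, hb'z⟩ := hW.exists_nbr_nonnbr hAC hz
  obtain ⟨x, hx, y, hy, hbx, hby⟩ := hB.exists_nbr_nonnbr hAC hb
  have black_mem : ∀ y ∈ A, y ∈ blockUnion (_root_.flip E) (_root_.flip 𝓑) C A :=
    fun _ => mem_blockUnion (𝓑 := _root_.flip 𝓑) hAC
  exact ⟨fun _ => hB.hom_of_notMem, fun _ => hW.hom_of_notMem,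
    ⟨b, black_mem b hb, x, mem_blockUnion hAC hx, y, mem_blockUnion hAC hy, hbx, hby⟩,
    ⟨z, mem_blockUnion hAC hz, b, black_mem b hb, b', black_mem b' hb', hbz, hb'z⟩⟩

theorem encard_nbrs_blockUnion_le (h : WhiteBlockSystem E 𝓑) {y : α}
    (hy : y ∈ blockUnion (flip E) (flip 𝓑) C A) :
    {z ∈ blockUnion E 𝓑 A C | E y z}.encard ≤ 2 := by
  obtain ⟨A', C', h', hs, hyA'⟩ := mem_blockUnion_flip.1 hy
  refine (Set.encard_le_encard ?_).trans (h.encard_nbrs_le A' C' h' y hyA')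
  rintro z ⟨⟨A'', C'', h'', hs', hz⟩, hyz⟩
  refine ⟨hyz, fun hc => (h.not_complete A'' C'' h'' z hz).1 ?_⟩
  rwa [← hs'.1, hs.1]

theorem decomposes_or_maxDegTwo [Finite α] [Finite β] (hS : SkewStarFree E)
    (hW : WhiteBlockSystem E 𝓑) (hB : WhiteBlockSystem (flip E) (flip 𝓑)) (hAC : 𝓑 A C)
    (hC : C.Nonempty) : Decomposes E ∨ MaxDegTwo E := by
  have hM := hW.isBimodule_blockUnion hB hAC hC
  by_contra! ⟨hdec, hdeg⟩
  have hblack : ∀ y, y ∈ blockUnion (_root_.flip E) (_root_.flip 𝓑) C A := fun y => by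
    by_contra hy
    exact hdec (hM.decomposes hS (.inl ⟨y, hy⟩))
  have hwhite : ∀ z, z ∈ blockUnion E 𝓑 A C := fun z => by
    by_contra hz
    exact hdec (hM.decomposes hS (.inr ⟨z, hz⟩))
  refine hdeg ⟨fun y => ?_, fun z => ?_⟩
  · refine (Set.encard_le_encard ?_).trans (hW.encard_nbrs_blockUnion_le (hblack y))
    exact fun z hz => ⟨hwhite z, hz⟩
  · refine (Set.encard_le_encard ?_).trans (hB.encard_nbrs_blockUnion_le (hwhite z))
    exact fun y hy => ⟨hblack y, hy⟩

end WhiteBlockSystem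

/-! ### Induced paths -/

/-- `a₀ c₀ a₁ c₁ a₂ …` is an induced path starting at the black vertex `a₀`. -/
def IsInducedPath (E : α → β → Prop) {m n : ℕ} (a : Fin m → α) (c : Fin n → β) : Prop :=
  ∀ i j, E (a i) (c j) ↔ (i : ℕ) = j ∨ (i : ℕ) = j + 1

/-- `z` is adjacent, among the vertices `a i`, to the first one only. -/
def IsPendant (E : α → β → Prop) {n : ℕ} [NeZero n] (a : Fin n → α) (z : β) : Prop :=
  ∀ i, E (a i) z ↔ i = 0

theorem forall_fin_four {P : Fin 4 → Prop} : (∀ i, P i) ↔ P 0 ∧ P 1 ∧ P 2 ∧ P 3 := by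
  simp [Fin.forall_fin_succ]

theorem exists_fin_four {P : Fin 4 → Prop} : (∃ i, P i) ↔ P 0 ∨ P 1 ∨ P 2 ∨ P 3 := by
  simp [Fin.exists_fin_succ]

theorem isPendant_four_iff {a : Fin 4 → α} {z : β} :
    IsPendant E a z ↔ E (a 0) z ∧ ¬E (a 1) z ∧ ¬E (a 2) z ∧ ¬E (a 3) z := by
  simp [IsPendant, forall_fin_four]

theorem isInducedPath_four_iff {a : Fin 4 → α} {c : Fin 4 → β} :
    IsInducedPath E a c ↔
      (E (a 0) (c 0) ∧ ¬E (a 0) (c 1) ∧ ¬E (a 0) (c 2) ∧ ¬E (a 0) (c 3)) ∧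
      (E (a 1) (c 0) ∧ E (a 1) (c 1) ∧ ¬E (a 1) (c 2) ∧ ¬E (a 1) (c 3)) ∧
      (¬E (a 2) (c 0) ∧ E (a 2) (c 1) ∧ E (a 2) (c 2) ∧ ¬E (a 2) (c 3)) ∧
      ¬E (a 3) (c 0) ∧ ¬E (a 3) (c 1) ∧ E (a 3) (c 2) ∧ E (a 3) (c 3) := by
  simp [IsInducedPath, forall_fin_four]

theorem encard_le_two {γ : Type*} {s : Set γ} {x y : γ} (h : ∀ z ∈ s, z = x ∨ z = y) :
    s.encard ≤ 2 := by
  refine (Set.encard_le_encard (t := {x, y}) h).trans ((Set.encard_insert_le _ _).trans ?_)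
  rw [Set.encard_singleton, one_add_one_eq_two]

theorem NoTwins.eq_of_update (hT : NoTwins E) {ι : Type*} [DecidableEq ι] {P : (ι → β) → Prop}
    {c : ι → β} {j : ι} {z : β} (hc : P c) (hz : P (Function.update c j z))
    (hadj : ∀ c c', P c → P c' → (∀ k ≠ j, c k = c' k) → ∀ y, E y (c j) → E y (c' j)) :
    z = c j := by
  have hoff : ∀ k ≠ j, Function.update c j z k = c k := fun k hk => Function.update_of_ne hk z c
  refine hT.white_eq fun y => ⟨fun hy => ?_, fun hy => ?_⟩
  · exact hadj _ _ hz hc hoff y (by rwa [Function.update_self])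
  · simpa only [Function.update_self] using
      hadj _ _ hc hz (fun k hk => (hoff k hk).symm) y hy

namespace IsInducedPath

theorem flip_rev {n : ℕ} {a : Fin n → α} {c : Fin n → β} (h : IsInducedPath E a c) :
    IsInducedPath (flip E) (c ∘ Fin.rev) (a ∘ Fin.rev) := by
  intro i j
  simp only [_root_.flip, Function.comp_apply, h _ _, Fin.val_rev]
  lia

theorem update {m n : ℕ} {a : Fin m → α} {c : Fin n → β} (h : IsInducedPath E a c) {j : Fin n}
    {z : β} (hz : ∀ i, E (a i) z ↔ E (a i) (c j)) :
    IsInducedPath E a (Function.update c j z) := by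
  intro i k
  obtain rfl | hk := eq_or_ne k j
  · rw [Function.update_self, hz, h]
  · rw [Function.update_of_ne hk, h]

section EightVertices

variable {a : Fin 4 → α} {c c' : Fin 4 → β} {z z' : β}

theorem white_trace (hS : SkewStarFree E) (h : IsInducedPath E a c) (z : β) :
    (∀ i, E (a i) z) ∨ (∀ i, ¬E (a i) z) ∨ (∃ j, ∀ i, E (a i) z ↔ E (a i) (c j)) ∨
      IsPendant E a z := by
  have star₁ := hS.1 (a 0) z (a 2) (c 2) (a 3) (c 3) (c 1)
  have star₂ := hS.1 (a 0) z (a 3) (c 2) (a 2) (c 1) (c 3)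
  have star₃ := hS.2 (c 3) (a 3) z (a 0) (c 0) (a 1) (a 2)
  have star₄ := hS.1 (a 0) (c 0) (a 1) z (a 3) (c 2) (c 1)
  have star₅ := hS.1 (a 0) (c 0) (a 1) (c 1) (a 2) (c 2) z
  have star₆ := hS.1 (a 1) (c 1) (a 2) (c 2) (a 3) (c 3) z
  simp only [isInducedPath_four_iff, isPendant_four_iff, IsSkewStar, _root_.flip,
    forall_fin_four, exists_fin_four] at *
  grind

theorem adj_of_eq_off (hS : SkewStarFree E) (h : IsInducedPath E a c) (h' : IsInducedPath E a c')
    {j : Fin 4} (hcc' : ∀ k ≠ j, c k = c' k) {y : α} (hy : E y (c j)) : E y (c' j) := by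
  by_contra hy'
  have trace := h.flip_rev.white_trace hS.flip y
  have trace' := h'.flip_rev.white_trace hS.flip y
  have star₀ := hS.1 y (c 0) (a 1) (c 1) (a 2) (c 2) (c' 0)
  have star₁ := hS.1 (a 3) (c 2) (a 2) (c 1) y (c 0) (c' 1)
  have star₂ := hS.1 (a 1) (c 1) (a 2) (c 2) y (c 3) (c' 2)
  have star₃ := hS.1 y (c 3) (a 3) (c 2) (a 2) (c 1) (c' 3)
  simp only [isInducedPath_four_iff, isPendant_four_iff, IsSkewStar, _root_.flip,
    Function.comp_apply, forall_fin_four, exists_fin_four] at *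
  fin_cases j <;> grind

theorem eq_of_trace_eq (hS : SkewStarFree E) (hT : NoTwins E) (h : IsInducedPath E a c)
    {j : Fin 4} (hz : ∀ i, E (a i) z ↔ E (a i) (c j)) : z = c j :=
  hT.eq_of_update h (h.update hz) fun _ _ h h' hoff _ => h.adj_of_eq_off hS h' hoff

theorem shift (h : IsInducedPath E a c) (hz : IsPendant E a z) :
    IsInducedPath E (a ∘ Fin.rev) ![c 2, c 1, c 0, z] := by
  rw [isInducedPath_four_iff] at h ⊢
  rw [isPendant_four_iff] at hz
  exact ⟨⟨h.2.2.2.2.2.1, h.2.2.2.2.1, h.2.2.2.1, hz.2.2.2⟩,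
    ⟨h.2.2.1.2.2.1, h.2.2.1.2.1, h.2.2.1.1, hz.2.2.1⟩,
    ⟨h.2.1.2.2.1, h.2.1.2.1, h.2.1.1, hz.2.1⟩, h.1.2.2.1, h.1.2.1, h.1.1, hz.1⟩

theorem pendant_unique (hS : SkewStarFree E) (hT : NoTwins E) (h : IsInducedPath E a c)
    (hz : IsPendant E a z) (hz' : IsPendant E a z') : z' = z :=
  (h.shift hz).eq_of_trace_eq hS hT (j := 3) fun i => (hz' i.rev).trans (hz i.rev).symm

theorem sameComplete_shift (hS : SkewStarFree E) (h : IsInducedPath E a c)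
    (hz : IsPendant E a z) :
    SameComplete E (Set.range a) (Set.range c) (Set.range (a ∘ Fin.rev))
      (Set.range ![c 2, c 1, c 0, z]) := by
  refine ⟨by rw [Fin.rev_surjective.range_comp], funext fun y => propext ?_⟩
  have trace := h.flip_rev.white_trace hS.flip y
  have trace' := (h.shift hz).flip_rev.white_trace hS.flip y
  simp only [Complete, Set.forall_mem_range, isInducedPath_four_iff, isPendant_four_iff,
    _root_.flip, Function.comp_apply, Fin.reduceRev, forall_fin_four, exists_fin_four,
    Matrix.cons_val] at *
  grind

theorem exists_nbrs_subset_pair (hS : SkewStarFree E) (hT : NoTwins E) (h : IsInducedPath E a c)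
    (i : Fin 4) : ∃ w, ∀ z, E (a i) z → (∀ k, E (a k) z) ∨ z = c i ∨ z = w := by
  have hz : ∀ z, E (a i) z → (∀ k, E (a k) z) ∨ z = c i ∨
      (∃ j : Fin 4, (i : ℕ) = j + 1 ∧ z = c j) ∨ i = 0 ∧ IsPendant E a z := by
    intro z hz
    obtain hc | hc | ⟨j, hj⟩ | hp := h.white_trace hS z
    · exact .inl hc
    · exact absurd hz (hc i)
    · obtain rfl := h.eq_of_trace_eq hS hT hj
      obtain hij | hij := (h i j).1 hz
      · exact .inr (.inl (congrArg c (Fin.ext hij.symm)))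
      · exact .inr (.inr (.inl ⟨j, hij, rfl⟩))
    · exact .inr (.inr (.inr ⟨(hp i).1 hz, hp⟩))
  by_cases hp : ∃ w, i = 0 ∧ IsPendant E a w
  · obtain ⟨w, rfl, hw⟩ := hp
    refine ⟨w, fun z hadj => (hz z hadj).imp_right (.imp_right ?_)⟩
    rintro (⟨j, hj, -⟩ | ⟨-, hpz⟩)
    · simp at hj
    · exact h.pendant_unique hS hT hw hpz
  · refine ⟨c (i - 1), fun z hadj => (hz z hadj).imp_right (.imp_right ?_)⟩
    rintro (⟨j, hj, rfl⟩ | hpz)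
    · exact congrArg c (by lia)
    · exact absurd ⟨z, hpz⟩ hp

end EightVertices

end IsInducedPath

/-- The vertex sets of the induced paths on eight vertices. -/
def IsEightBlock (E : α → β → Prop) (A : Set α) (C : Set β) : Prop :=
  ∃ (a : Fin 4 → α) (c : Fin 4 → β), IsInducedPath E a c ∧ Set.range a = A ∧ Set.range c = C

theorem IsEightBlock.flip {A : Set α} {C : Set β} (h : IsEightBlock E A C) :
    IsEightBlock (flip E) C A := by
  obtain ⟨a, c, h, rfl, rfl⟩ := h
  exact ⟨_, _, h.flip_rev, Fin.rev_surjective.range_comp c, Fin.rev_surjective.range_comp a⟩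

theorem flip_isEightBlock (E : α → β → Prop) : flip (IsEightBlock E) = IsEightBlock (flip E) :=
  funext₂ fun _ _ => propext ⟨.flip, .flip⟩

theorem whiteBlockSystem_isEightBlock (hS : SkewStarFree E) (hT : NoTwins E) :
    WhiteBlockSystem E (IsEightBlock E) where
  complete_or_anticomplete_or_mem := by
    rintro _ _ ⟨a, c, h, rfl, rfl⟩ z
    simp only [Complete, Set.forall_mem_range]
    obtain hc | hc | ⟨j, hj⟩ | hp := h.white_trace hS z
    · exact .inl hc
    · exact .inr (.inl hc)
    · exact .inr (.inr ⟨_, _, ⟨a, c, h, rfl, rfl⟩, ⟨rfl, rfl⟩, j, (h.eq_of_trace_eq hS hT hj).symm⟩)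
    · exact .inr (.inr ⟨_, _, ⟨_, _, h.shift hp, rfl, rfl⟩, h.sameComplete_shift hS hp, 3, rfl⟩)
  not_complete := by
    rintro _ _ ⟨a, c, h, rfl, rfl⟩ _ ⟨j, rfl⟩
    simp only [Complete, Set.forall_mem_range, Pi.compl_apply, compl_iff_not, h _ _]
    constructor
    · intro hc
      have := hc (j + 2)
      lia
    · exact fun hc => hc j (.inl rfl)
  encard_nbrs_le := by
    rintro _ _ ⟨a, c, h, rfl, rfl⟩ _ ⟨i, rfl⟩
    obtain ⟨w, hw⟩ := h.exists_nbrs_subset_pair hS hT i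
    simp only [Complete, Set.forall_mem_range]
    exact encard_le_two fun z hz => (hw z hz.1).resolve_left hz.2

theorem decomposes_or_maxDegTwo_of_eight_path [Finite α] [Finite β] (hS : SkewStarFree E)
    (hT : NoTwins E) {a : Fin 4 → α} {c : Fin 4 → β} (h : IsInducedPath E a c) :
    Decomposes E ∨ MaxDegTwo E :=
  (whiteBlockSystem_isEightBlock hS hT).decomposes_or_maxDegTwo hS
    (flip_isEightBlock E ▸ whiteBlockSystem_isEightBlock hS.flip hT.flip)
    ⟨a, c, h, rfl, rfl⟩ (Set.range_nonempty c)

/-- Neither the graph nor its bipartite complement has an induced path on eight vertices. -/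
def NoEightPath (E : α → β → Prop) : Prop :=
  ∀ (a : Fin 4 → α) (c : Fin 4 → β), ¬IsInducedPath E a c ∧ ¬IsInducedPath Eᶜ a c

/-- `z` is adjacent, among the vertices `a i`, to the first and the last only: it closes an induced
path from `a 0` to `a 3` to a cycle. -/
def IsClosing (E : α → β → Prop) (a : Fin 4 → α) (z : β) : Prop :=
  E (a 0) z ∧ ¬E (a 1) z ∧ ¬E (a 2) z ∧ E (a 3) z

theorem NoEightPath.flip (h : NoEightPath E) : NoEightPath (flip E) :=
  fun _ _ => ⟨fun hp => (h _ _).1 hp.flip_rev,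
    fun hp => (h _ _).2 (IsInducedPath.flip_rev (E := _root_.flip Eᶜ) hp)⟩

theorem forall_fin_three {P : Fin 3 → Prop} : (∀ i, P i) ↔ P 0 ∧ P 1 ∧ P 2 := by
  simp [Fin.forall_fin_succ]

theorem exists_fin_three {P : Fin 3 → Prop} : (∃ i, P i) ↔ P 0 ∨ P 1 ∨ P 2 := by
  simp [Fin.exists_fin_succ]

theorem isInducedPath_four_three_iff {a : Fin 4 → α} {c : Fin 3 → β} :
    IsInducedPath E a c ↔
      (E (a 0) (c 0) ∧ ¬E (a 0) (c 1) ∧ ¬E (a 0) (c 2)) ∧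
      (E (a 1) (c 0) ∧ E (a 1) (c 1) ∧ ¬E (a 1) (c 2)) ∧
      (¬E (a 2) (c 0) ∧ E (a 2) (c 1) ∧ E (a 2) (c 2)) ∧
      ¬E (a 3) (c 0) ∧ ¬E (a 3) (c 1) ∧ E (a 3) (c 2) := by
  simp [IsInducedPath, forall_fin_four, forall_fin_three]

namespace IsInducedPath

theorem update_black {m n : ℕ} {a : Fin m → α} {c : Fin n → β} (h : IsInducedPath E a c)
    {i : Fin m} {y : α} (hy : ∀ j, E y (c j) ↔ E (a i) (c j)) :
    IsInducedPath E (Function.update a i y) c := by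
  intro k j
  obtain rfl | hk := eq_or_ne k i
  · rw [Function.update_self, hy, h]
  · rw [Function.update_of_ne hk, h]

section SevenVertices

variable {a a' : Fin 4 → α} {c c' : Fin 3 → β} {y : α} {z z' : β}

theorem white_trace_seven (hS : SkewStarFree E) (h8 : NoEightPath E)
    (h : IsInducedPath E a c) (z : β) :
    (∀ i, E (a i) z) ∨ (∀ i, ¬E (a i) z) ∨ (∃ j, ∀ i, E (a i) z ↔ E (a i) (c j)) ∨
      IsClosing E a z := by
  have star₁ := hS.1 (a 3) (c 2) (a 2) z (a 0) (c 0) (c 1)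
  have star₂ := hS.1 (a 0) (c 0) (a 1) z (a 3) (c 2) (c 1)
  have star₃ := hS.1 (a 0) (c 0) (a 1) (c 1) (a 2) (c 2) z
  have star₄ := hS.1 (a 3) (c 2) (a 2) (c 1) (a 1) (c 0) z
  have path₁ := (h8 a ![c 0, c 1, c 2, z]).1
  have path₂ := (h8 ![a 3, a 2, a 1, a 0] ![c 2, c 1, c 0, z]).1
  have path₃ := (h8 ![a 2, a 3, a 0, a 1] ![c 0, c 1, c 2, z]).2
  have path₄ := (h8 ![a 1, a 0, a 3, a 2] ![c 2, c 1, c 0, z]).2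
  simp only [isInducedPath_four_iff, isInducedPath_four_three_iff, IsClosing, IsSkewStar,
    forall_fin_four, exists_fin_three, Matrix.cons_val, Pi.compl_apply, compl_iff_not] at *
  grind

theorem black_trace_seven (hS : SkewStarFree E) (h : IsInducedPath E a c) (y : α) :
    (∀ j, E y (c j)) ∨ (∀ j, ¬E y (c j)) ∨ ∃ i, ∀ j, E y (c j) ↔ E (a i) (c j) := by
  have star₁ := hS.2 (c 1) (a 1) (c 0) y (c 2) (a 3) (a 0)
  have star₂ := hS.2 (c 0) (a 1) (c 1) (a 2) (c 2) (a 3) y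
  simp only [isInducedPath_four_three_iff, IsSkewStar, _root_.flip, forall_fin_three,
    exists_fin_four] at *
  grind

theorem white_adj_of_eq_off_seven (hS : SkewStarFree E) (h : IsInducedPath E a c)
    (h' : IsInducedPath E a c') {j : Fin 3} (hcc' : ∀ k ≠ j, c k = c' k) (hy : E y (c j)) :
    E y (c' j) := by
  by_contra hy'
  have trace := h.black_trace_seven hS y
  have trace' := h'.black_trace_seven hS y
  have star₁ := hS.1 y (c 0) (a 1) (c 1) (a 2) (c 2) (c' 0)
  have star₂ := hS.1 (a 3) (c 2) y (c 0) (a 0) (c' 0) (c 1)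
  have star₃ := hS.1 (a 3) (c 2) (a 2) (c 1) y (c 0) (c' 1)
  have star₄ := hS.1 (a 0) (c 0) (a 1) (c 1) y (c 2) (c' 1)
  have star₅ := hS.1 y (c 2) (a 2) (c 1) (a 1) (c 0) (c' 2)
  have star₆ := hS.1 (a 0) (c 0) y (c 2) (a 3) (c' 2) (c 1)
  simp only [isInducedPath_four_three_iff, IsSkewStar, forall_fin_three, exists_fin_four] at *
  fin_cases j <;> grind

theorem white_eq_of_trace_eq_seven (hS : SkewStarFree E) (hT : NoTwins E)
    (h : IsInducedPath E a c) {j : Fin 3} (hz : ∀ i, E (a i) z ↔ E (a i) (c j)) : z = c j :=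
  hT.eq_of_update h (h.update hz) fun _ _ h h' hoff _ => h.white_adj_of_eq_off_seven hS h' hoff

theorem black_adj_of_eq_off_seven (hS : SkewStarFree E) (h8 : NoEightPath E)
    (h : IsInducedPath E a c) (h' : IsInducedPath E a' c) {i : Fin 4}
    (haa' : ∀ k ≠ i, a k = a' k) (hz : E (a i) z) : E (a' i) z := by
  have trace := h.white_trace_seven hS h8 z
  have trace' := h'.white_trace_seven hS h8 z
  simp only [isInducedPath_four_three_iff, IsClosing, forall_fin_four, exists_fin_three] at *
  fin_cases i <;> grind

theorem black_eq_of_trace_eq_seven (hS : SkewStarFree E) (h8 : NoEightPath E) (hT : NoTwins E)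
    (h : IsInducedPath E a c) {i : Fin 4} (hy : ∀ j, E y (c j) ↔ E (a i) (c j)) : y = a i :=
  hT.flip.eq_of_update h (h.update_black hy) (P := fun a => IsInducedPath E a c)
    fun _ _ h h' hoff _ => h.black_adj_of_eq_off_seven hS h8 h' hoff

theorem complete_or_anticomplete_or_mem_range (hS : SkewStarFree E) (h8 : NoEightPath E)
    (hT : NoTwins E) (h : IsInducedPath E a c) (y : α) :
    (∀ j, E y (c j)) ∨ (∀ j, ¬E y (c j)) ∨ ∃ i, y = a i :=
  (h.black_trace_seven hS y).imp_right <| .imp_right fun ⟨i, hi⟩ =>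
    ⟨i, h.black_eq_of_trace_eq_seven hS h8 hT hi⟩

theorem rotate (h : IsInducedPath E a c) (hz : IsClosing E a z) :
    IsInducedPath E ![a 1, a 2, a 3, a 0] ![c 1, c 2, z] := by
  simp only [isInducedPath_four_three_iff, IsClosing, Matrix.cons_val] at *
  tauto

theorem closing_unique (hS : SkewStarFree E) (hT : NoTwins E) (h : IsInducedPath E a c)
    (hz : IsClosing E a z) (hz' : IsClosing E a z') : z' = z := by
  refine (h.rotate hz).white_eq_of_trace_eq_seven hS hT (j := 2) ?_
  simp only [IsClosing, forall_fin_four, Matrix.cons_val] at *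
  tauto

theorem sameComplete_rotate (hS : SkewStarFree E) (h8 : NoEightPath E) (hT : NoTwins E)
    (h : IsInducedPath E a c) (hz : IsClosing E a z) :
    SameComplete E (Set.range a) (Set.range c) (Set.range ![a 1, a 2, a 3, a 0])
      (Set.range ![c 1, c 2, z]) := by
  refine ⟨funext fun w => propext ?_, funext fun y => propext ?_⟩
  · simp only [Complete, Set.forall_mem_range, forall_fin_four, Matrix.cons_val]
    tauto
  · have trace := h.complete_or_anticomplete_or_mem_range hS h8 hT y
    have trace' := (h.rotate hz).complete_or_anticomplete_or_mem_range hS h8 hT y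
    simp only [Complete, Set.forall_mem_range, isInducedPath_four_three_iff, IsClosing,
      _root_.flip, forall_fin_three, exists_fin_four, Matrix.cons_val] at *
    grind

end SevenVertices

end IsInducedPath

/-- The vertex sets of the induced paths on seven vertices with black ends. -/
def IsSevenBlock (E : α → β → Prop) (A : Set α) (C : Set β) : Prop :=
  ∃ (a : Fin 4 → α) (c : Fin 3 → β), IsInducedPath E a c ∧ Set.range a = A ∧ Set.range c = C

theorem IsInducedPath.exists_white_nbrs_subset_pair (hS : SkewStarFree E) (h8 : NoEightPath E)
    (hT : NoTwins E) {a : Fin 4 → α} {c : Fin 3 → β} (h : IsInducedPath E a c) (i : Fin 4) :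
    ∃ u v, ∀ z, E (a i) z → (∀ k, E (a k) z) ∨ z = u ∨ z = v := by
  obtain ⟨w, hw⟩ : ∃ w, ∀ z, IsClosing E a z → z = w := by
    by_cases hclose : ∃ w, IsClosing E a w
    · obtain ⟨w, hw⟩ := hclose
      exact ⟨w, fun z => h.closing_unique hS hT hw⟩
    · exact ⟨c 0, fun z hz => absurd ⟨z, hz⟩ hclose⟩
  have hz : ∀ z, E (a i) z → (∀ k, E (a k) z) ∨ (z = c 0 ∨ z = c 1 ∨ z = c 2) ∨
      z = w ∧ IsClosing E a z := by
    intro z hz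
    obtain hc | hc | ⟨j, hj⟩ | hc := h.white_trace_seven hS h8 z
    · exact .inl hc
    · exact absurd hz (hc i)
    · exact .inr (.inl (exists_fin_three (P := (z = c ·)) |>.1
        ⟨j, h.white_eq_of_trace_eq_seven hS hT hj⟩))
    · exact .inr (.inr ⟨hw z hc, hc⟩)
  rw [isInducedPath_four_three_iff] at h
  refine ⟨![c 0, c 0, c 1, c 2] i, ![w, c 1, c 2, w] i, fun z hadj => ?_⟩
  have := hz z hadj
  fin_cases i <;>
    simp only [IsClosing, forall_fin_four, Fin.zero_eta, Fin.mk_one, Fin.reduceFinMk,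
      Matrix.cons_val] at * <;>
    grind

theorem whiteBlockSystem_isSevenBlock (hS : SkewStarFree E) (h8 : NoEightPath E)
    (hT : NoTwins E) : WhiteBlockSystem E (IsSevenBlock E) where
  complete_or_anticomplete_or_mem := by
    rintro _ _ ⟨a, c, h, rfl, rfl⟩ z
    simp only [Complete, Set.forall_mem_range]
    obtain hc | hc | ⟨j, hj⟩ | hz := h.white_trace_seven hS h8 z
    · exact .inl hc
    · exact .inr (.inl hc)
    · exact .inr (.inr ⟨_, _, ⟨a, c, h, rfl, rfl⟩, ⟨rfl, rfl⟩, j,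
        (h.white_eq_of_trace_eq_seven hS hT hj).symm⟩)
    · exact .inr (.inr ⟨_, _, ⟨_, _, h.rotate hz, rfl, rfl⟩,
        h.sameComplete_rotate hS h8 hT hz, 2, rfl⟩)
  not_complete := by
    rintro _ _ ⟨a, c, h, rfl, rfl⟩ _ ⟨j, rfl⟩
    simp only [Complete, Set.forall_mem_range, Pi.compl_apply, compl_iff_not, h _ _,
      forall_fin_four]
    fin_cases j <;> simp
  encard_nbrs_le := by
    rintro _ _ ⟨a, c, h, rfl, rfl⟩ _ ⟨i, rfl⟩
    obtain ⟨u, v, huv⟩ := h.exists_white_nbrs_subset_pair hS h8 hT i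
    simp only [Complete, Set.forall_mem_range]
    exact encard_le_two fun z hz => (huv z hz.1).resolve_left hz.2

theorem whiteBlockSystem_flip_isSevenBlock (hS : SkewStarFree E) (h8 : NoEightPath E)
    (hT : NoTwins E) : WhiteBlockSystem (flip E) (flip (IsSevenBlock E)) where
  complete_or_anticomplete_or_mem := by
    rintro _ _ ⟨a, c, h, rfl, rfl⟩ y
    simp only [Complete, Set.forall_mem_range]
    obtain hc | hc | ⟨i, rfl⟩ := h.complete_or_anticomplete_or_mem_range hS h8 hT y
    · exact .inl hc
    · exact .inr (.inl hc)
    · exact .inr (.inr ⟨_, _, ⟨a, c, h, rfl, rfl⟩, ⟨rfl, rfl⟩, i, rfl⟩)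
  not_complete := by
    rintro _ _ ⟨a, c, h, rfl, rfl⟩ _ ⟨i, rfl⟩
    simp only [Complete, Set.forall_mem_range, Pi.compl_apply, compl_iff_not, flip, h _ _,
      forall_fin_three]
    fin_cases i <;> simp
  encard_nbrs_le := by
    rintro _ _ ⟨a, c, h, rfl, rfl⟩ _ ⟨j, rfl⟩
    simp only [Complete, Set.forall_mem_range]
    refine encard_le_two (x := a j.castSucc) (y := a j.succ) fun y ⟨hyj, hy⟩ => ?_
    obtain hc | hc | ⟨i, rfl⟩ := h.complete_or_anticomplete_or_mem_range hS h8 hT y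
    · exact absurd hc hy
    · exact absurd hyj (hc j)
    · exact ((h i j).1 hyj).imp (fun hij => congrArg a (Fin.ext hij))
        fun hij => congrArg a (Fin.ext hij)

theorem decomposes_or_maxDegTwo_of_seven_path [Finite α] [Finite β] (hS : SkewStarFree E)
    (h8 : NoEightPath E) (hT : NoTwins E) {a : Fin 4 → α} {c : Fin 3 → β}
    (h : IsInducedPath E a c) : Decomposes E ∨ MaxDegTwo E :=
  (whiteBlockSystem_isSevenBlock hS h8 hT).decomposes_or_maxDegTwo hS
    (whiteBlockSystem_flip_isSevenBlock hS h8 hT) ⟨a, c, h, rfl, rfl⟩ (Set.range_nonempty c)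

/-! ### Graphs without long paths -/

/-- No induced path on seven vertices, whatever the colour of its ends. -/
def NoSevenPath (E : α → β → Prop) : Prop :=
  (∀ (a : Fin 4 → α) (c : Fin 3 → β), ¬IsInducedPath E a c) ∧
    ∀ (c : Fin 4 → β) (a : Fin 3 → α), ¬IsInducedPath (flip E) c a

theorem NoSevenPath.flip (h : NoSevenPath E) : NoSevenPath (flip E) :=
  h.symm

theorem IsInducedPath.of_compl_seven {a : Fin 4 → α} {c : Fin 3 → β}
    (h : IsInducedPath Eᶜ a c) :
    IsInducedPath E ![a 1, a 0, a 3, a 2] ![c 2, c 1, c 0] := by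
  simp only [isInducedPath_four_three_iff, Matrix.cons_val, Pi.compl_apply, compl_iff_not,
    not_not] at *
  tauto

theorem NoSevenPath.compl (h : NoSevenPath E) : NoSevenPath Eᶜ :=
  ⟨fun _ _ hp => h.1 _ _ hp.of_compl_seven,
    fun _ _ hp => h.2 _ _ (IsInducedPath.of_compl_seven (E := _root_.flip E) hp)⟩

/-- The disjoint union of the induced path `b₁ x₁ b₂ x₂` and the edge `c w`. -/
structure IsPathAndEdge (E : α → β → Prop) (c b₁ b₂ : α) (w x₁ x₂ : β) : Prop where
  adj_edge : E c w
  adj₁₁ : E b₁ x₁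
  adj₂₁ : E b₂ x₁
  adj₂₂ : E b₂ x₂
  not_adj₁₂ : ¬E b₁ x₂
  not_adj_w₁ : ¬E b₁ w
  not_adj_w₂ : ¬E b₂ w
  not_adj_c₁ : ¬E c x₁
  not_adj_c₂ : ¬E c x₂

/-- `b` and `b'` are not adjacent to `w` and have a common neighbour outside the neighbourhood of
`c`. -/
def IsLinked (E : α → β → Prop) (c : α) (w : β) (b b' : α) : Prop :=
  ¬E b w ∧ ¬E b' w ∧ ∃ x, ¬E c x ∧ E b x ∧ E b' x

/-- Some vertex outside the neighbourhood of `c` is adjacent to exactly one of `b` and `b'`. -/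
def IsSeparated (E : α → β → Prop) (c : α) (b b' : α) : Prop :=
  ∃ x, ¬E c x ∧ ¬(E b x ↔ E b' x)

/-- The black vertices in the component of `b` in the subgraph induced by the vertices adjacent to
neither end of the edge `c w`. -/
def linkClass (E : α → β → Prop) (c : α) (w : β) (b : α) : Set α :=
  {b' | Relation.ReflTransGen (IsLinked E c w) b b'}

section LinkClass

variable {c b b' b₁ b₂ : α} {w v x x₁ x₂ : β}

theorem IsPathAndEdge.flip (h : IsPathAndEdge E c b₁ b₂ w x₁ x₂) :
    IsPathAndEdge (flip E) w x₂ x₁ c b₂ b₁ :=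
  ⟨h.adj_edge, h.adj₂₂, h.adj₂₁, h.adj₁₁, h.not_adj₁₂, h.not_adj_c₂, h.not_adj_c₁, h.not_adj_w₂,
    h.not_adj_w₁⟩

theorem IsPathAndEdge.isLinked (h : IsPathAndEdge E c b₁ b₂ w x₁ x₂) : IsLinked E c w b₁ b₂ :=
  ⟨h.not_adj_w₁, h.not_adj_w₂, x₁, h.not_adj_c₁, h.adj₁₁, h.adj₂₁⟩

theorem IsPathAndEdge.isSeparated (h : IsPathAndEdge E c b₁ b₂ w x₁ x₂) : IsSeparated E c b₁ b₂ :=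
  ⟨x₂, h.not_adj_c₂, fun hiff => h.not_adj₁₂ (hiff.2 h.adj₂₂)⟩

theorem IsLinked.symm (h : IsLinked E c w b b') : IsLinked E c w b' b :=
  ⟨h.2.1, h.1, h.2.2.imp fun _ => .imp_right And.symm⟩

theorem IsSeparated.symm (h : IsSeparated E c b b') : IsSeparated E c b' b :=
  h.imp fun _ => .imp_right (mt Iff.symm)

theorem IsLinked.adj_iff_of_adj_of_not_adj (hS : SkewStarFree E) (h7 : NoSevenPath E)
    (hcw : E c w) (hcv : E c v) (h : IsLinked E c w b b') (hx : ¬E c x) (hbx : ¬E b x)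
    (hb'x : E b' x) : E b v ↔ E b' v := by
  obtain ⟨hbw, hb'w, u, hcu, hbu, hb'u⟩ := h
  have star := hS.1 b u b' v c w x
  have path := h7.2 ![w, v, u, x] ![c, b, b']
  simp only [isInducedPath_four_three_iff, IsSkewStar, _root_.flip, Matrix.cons_val] at star path
  tauto

theorem IsLinked.adj_iff (hS : SkewStarFree E) (h7 : NoSevenPath E) (hcw : E c w) (hcv : E c v)
    (h : IsLinked E c w b b') (hsep : IsSeparated E c b b') : E b v ↔ E b' v := by
  obtain ⟨x, hx, hne⟩ := hsep
  by_cases hbx : E b x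
  · have hb'x : ¬E b' x := fun hb'x => hne (iff_of_true hbx hb'x)
    exact (h.symm.adj_iff_of_adj_of_not_adj hS h7 hcw hcv hx hb'x hbx).symm
  · have hb'x : E b' x := by_contra fun hb'x => hne (iff_of_false hbx hb'x)
    exact h.adj_iff_of_adj_of_not_adj hS h7 hcw hcv hx hbx hb'x

theorem adj_iff_of_mem_linkClass (hS : SkewStarFree E) (h7 : NoSevenPath E)
    (hQ : IsPathAndEdge E c b₁ b₂ w x₁ x₂) (hcv : E c v) (hb : b ∈ linkClass E c w b₁) :
    E b v ↔ E b₁ v := by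
  have adj_iff {b b'} := IsLinked.adj_iff (b := b) (b' := b') hS h7 hQ.adj_edge hcv
  suffices h : (E b v ↔ E b₁ v) ∧ ∃ d, IsLinked E c w b d ∧ IsSeparated E c b d from h.1
  induction hb with
  | refl => exact ⟨Iff.rfl, b₂, hQ.isLinked, hQ.isSeparated⟩
  | @tail b b' _ hbb' ih =>
    obtain ⟨hbv, d, hbd, hsep⟩ := ih
    by_cases hsep' : IsSeparated E c b b'
    · exact ⟨(adj_iff hbb' hsep').symm.trans hbv, b, hbb'.symm, hsep'.symm⟩
    · have htwin : ∀ x, ¬E c x → (E b x ↔ E b' x) := by simpa [IsSeparated] using hsep'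
      have hb'd : IsLinked E c w b' d := by
        obtain ⟨-, hdw, x, hx, hbx, hdx⟩ := hbd
        exact ⟨hbb'.2.1, hdw, x, hx, (htwin x hx).1 hbx, hdx⟩
      have hsep_d : IsSeparated E c b' d := by
        obtain ⟨x, hx, hne⟩ := hsep
        exact ⟨x, hx, by rwa [← htwin x hx]⟩
      exact ⟨(adj_iff hb'd hsep_d).trans ((adj_iff hbd hsep).symm.trans hbv), d, hb'd, hsep_d⟩

theorem not_adj_of_mem_linkClass (hw : ¬E b₁ w) (hb : b ∈ linkClass E c w b₁) : ¬E b w := by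
  obtain rfl | ⟨_, -, h⟩ := Relation.ReflTransGen.cases_tail hb
  · exact hw
  · exact h.2.1

theorem IsPathAndEdge.mem_linkClass_flip (hQ : IsPathAndEdge E c b₁ b₂ w x₁ x₂)
    (hb : b ∈ linkClass E c w b₁) (hx : ¬E c x) (hbx : E b x) :
    x ∈ linkClass (_root_.flip E) w c x₂ := by
  induction hb generalizing x with
  | refl =>
    exact .tail (.single hQ.flip.isLinked) ⟨hQ.not_adj_c₁, hx, b₁, hQ.not_adj_w₁, hQ.adj₁₁, hbx⟩
  | @tail b b' _ hbb' ih =>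
    obtain ⟨-, hb'w, y, hy, hby, hb'y⟩ := hbb'
    exact .tail (ih hy hby) ⟨hy, hx, b', hb'w, hb'y, hbx⟩

theorem IsPathAndEdge.isBimodule_linkClass (hS : SkewStarFree E) (h7 : NoSevenPath E)
    (hQ : IsPathAndEdge E c b₁ b₂ w x₁ x₂) :
    IsBimodule E (linkClass E c w b₁) {x | ¬E c x ∧ ∃ b ∈ linkClass E c w b₁, E b x} := by
  have hb₁ : b₁ ∈ linkClass E c w b₁ := .refl
  have hb₂ : b₂ ∈ linkClass E c w b₁ := .single hQ.isLinked
  refine ⟨fun a ha => ?_, fun v hv => ?_,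
    ⟨b₁, hb₁, x₁, ⟨hQ.not_adj_c₁, b₁, hb₁, hQ.adj₁₁⟩, x₂, ⟨hQ.not_adj_c₂, b₂, hb₂, hQ.adj₂₂⟩,
      hQ.adj₁₁, hQ.not_adj₁₂⟩,
    ⟨x₂, ⟨hQ.not_adj_c₂, b₂, hb₂, hQ.adj₂₂⟩, b₂, hb₂, b₁, hb₁, hQ.adj₂₂, hQ.not_adj₁₂⟩⟩
  · by_cases haw : E a w
    · have hax : ∀ x, (¬E c x ∧ ∃ b ∈ linkClass E c w b₁, E b x) → (E a x ↔ E a x₂) :=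
        fun x ⟨hx, b, hb, hbx⟩ => adj_iff_of_mem_linkClass hS.flip h7.flip hQ.flip haw
          (hQ.mem_linkClass_flip hb hx hbx)
      exact (em (E a x₂)).imp (fun h x hx => (hax x hx).2 h) fun h x hx => mt (hax x hx).1 h
    · exact .inr fun x ⟨hx, b, hb, hbx⟩ hax =>
        ha (.tail hb ⟨not_adj_of_mem_linkClass hQ.not_adj_w₁ hb, haw, x, hx, hbx, hax⟩)
  · by_cases hcv : E c v
    · have hbv := fun b (hb : b ∈ linkClass E c w b₁) => adj_iff_of_mem_linkClass hS h7 hQ hcv hb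
      exact (em (E b₁ v)).imp (fun h b hb => (hbv b hb).2 h) fun h b hb => mt (hbv b hb).1 h
    · exact .inr fun b hb hbv => hv ⟨hcv, b, hb, hbv⟩

theorem IsPathAndEdge.decomposes [Finite α] [Finite β] (hS : SkewStarFree E)
    (h7 : NoSevenPath E) (hQ : IsPathAndEdge E c b₁ b₂ w x₁ x₂) : Decomposes E :=
  (hQ.isBimodule_linkClass hS h7).decomposes hS
    (.inl ⟨c, fun hc => not_adj_of_mem_linkClass hQ.not_adj_w₁ hc hQ.adj_edge⟩)

end LinkClass

/-- Neither the graph nor its bipartite complement has an induced disjoint union of a path on four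
vertices and an edge. -/
def NoPathAndEdge (E : α → β → Prop) : Prop :=
  ∀ c b₁ b₂ w x₁ x₂, ¬IsPathAndEdge E c b₁ b₂ w x₁ x₂ ∧ ¬IsPathAndEdge Eᶜ c b₁ b₂ w x₁ x₂

/-- The edges `c u` and `b w` form an induced matching. -/
def IsTwoK2 (E : α → β → Prop) (c b : α) (u w : β) : Prop :=
  E c u ∧ E b w ∧ ¬E c w ∧ ¬E b u

/-- The black end of the edge `c u` together with the black ends of the edges that form an induced
matching with it. The corresponding set of white ends is `matchedSide (flip E) u c`. -/
def matchedSide (E : α → β → Prop) (c : α) (u : β) : Set α :=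
  {b | b = c ∨ ∃ w, IsTwoK2 E c b u w}

section TwoK2

variable {c b : α} {u w v : β}

theorem NoPathAndEdge.flip (h : NoPathAndEdge E) : NoPathAndEdge (flip E) :=
  fun _ _ _ _ _ _ => ⟨fun hQ => (h _ _ _ _ _ _).1 hQ.flip,
    fun hQ => (h _ _ _ _ _ _).2 (IsPathAndEdge.flip (E := _root_.flip Eᶜ) hQ)⟩

theorem IsTwoK2.flip (h : IsTwoK2 E c b u w) : IsTwoK2 (flip E) u w c b :=
  ⟨h.1, h.2.1, h.2.2.2, h.2.2.1⟩

theorem IsTwoK2.eq_of_adj_of_not_adj (hQ : NoPathAndEdge E) (hT : NoTwins E)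
    (h : IsTwoK2 E c b u w) (hcv : E c v) (hbv : ¬E b v) : v = u := by
  refine hT.white_eq fun y => ?_
  obtain ⟨hcu, hbw, hcw, hbu⟩ := h
  by_contra hne
  by_cases hyw : E y w
  · by_cases hyu : E y u
    · have hyv : ¬E y v := fun hyv => hne (iff_of_true hyv hyu)
      exact (hQ c y b w v u).2 ⟨hcw, hyv, hbv, hbu, not_not_intro hyu, not_not_intro hyw,
        not_not_intro hbw, not_not_intro hcv, not_not_intro hcu⟩
    · have hyv : E y v := by_contra fun hyv => hne (iff_of_false hyv hyu)
      exact (hQ c y b w u v).2 ⟨hcw, hyu, hbu, hbv, not_not_intro hyv, not_not_intro hyw,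
        not_not_intro hbw, not_not_intro hcu, not_not_intro hcv⟩
  · by_cases hyu : E y u
    · have hyv : ¬E y v := fun hyv => hne (iff_of_true hyv hyu)
      exact (hQ b y c w u v).1 ⟨hbw, hyu, hcu, hcv, hyv, hyw, hcw, hbu, hbv⟩
    · have hyv : E y v := by_contra fun hyv => hne (iff_of_false hyv hyu)
      exact (hQ b y c w v u).1 ⟨hbw, hyv, hcv, hcu, hyu, hyw, hcw, hbv, hbu⟩

theorem matchedSide_white_hom (hQ : NoPathAndEdge E) (hT : NoTwins E) (hcu : E c u)
    (hv : v ∉ matchedSide (flip E) u c) :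
    (∀ b ∈ matchedSide E c u, E b v) ∨ ∀ b ∈ matchedSide E c u, ¬E b v := by
  have hadj_iff : ∀ b ∈ matchedSide E c u, (E b v ↔ E c v) := by
    rintro b (rfl | ⟨w, h⟩)
    · rfl
    · refine ⟨fun hbv => ?_, fun hcv => ?_⟩ <;> by_contra hn
      · have hcbuv : IsTwoK2 E c b u v := ⟨hcu, hbv, hn, h.2.2.2⟩
        exact hv (.inr ⟨b, hcbuv.flip⟩)
      · exact hv (.inl (h.eq_of_adj_of_not_adj hQ hT hcv hn))
  exact (em (E c v)).imp (fun h b hb => (hadj_iff b hb).2 h) fun h b hb => mt (hadj_iff b hb).1 h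

theorem IsTwoK2.isBimodule_matchedSide (hQ : NoPathAndEdge E) (hT : NoTwins E)
    (h : IsTwoK2 E c b u w) :
    IsBimodule E (matchedSide E c u) (matchedSide (_root_.flip E) u c) :=
  ⟨fun _ => matchedSide_white_hom hQ.flip hT.flip h.1, fun _ => matchedSide_white_hom hQ hT h.1,
    ⟨c, .inl rfl, u, .inl rfl, w, .inr ⟨b, h.flip⟩, h.1, h.2.2.1⟩,
    ⟨u, .inl rfl, c, .inl rfl, b, .inr ⟨w, h⟩, h.1, h.2.2.2⟩⟩

theorem isParallelPart_singleton_of_matchedSide_eq_univ (hblack : matchedSide E c u = Set.univ)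
    (hwhite : matchedSide (flip E) u c = Set.univ) : IsParallelPart E {c} {u} := by
  rw [Set.eq_univ_iff_forall] at hblack hwhite
  refine fun a z haz => ⟨?_, ?_⟩
  · rintro rfl
    exact (hwhite z).resolve_right fun ⟨_, h⟩ => h.2.2.2 haz
  · rintro rfl
    exact (hblack a).resolve_right fun ⟨_, h⟩ => h.2.2.2 haz

theorem IsTwoK2.decomposes [Finite α] [Finite β] (hS : SkewStarFree E) (hQ : NoPathAndEdge E)
    (hT : NoTwins E) (h : IsTwoK2 E c b u w) : Decomposes E := by
  by_cases hproper : (matchedSide E c u)ᶜ.Nonempty ∨ (matchedSide (_root_.flip E) u c)ᶜ.Nonempty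
  · exact (h.isBimodule_matchedSide hQ hT).decomposes hS hproper
  · simp only [Set.nonempty_compl, not_or, ne_eq, not_not] at hproper
    exact ⟨{c}, {u}, ⟨.inl ⟨c, rfl⟩, .inl ⟨b, fun hbc => h.2.2.2 (hbc ▸ h.1)⟩⟩,
      .inl (isParallelPart_singleton_of_matchedSide_eq_univ hproper.1 hproper.2)⟩

end TwoK2

theorem exists_white_nbhd_maximum [Finite β] [Nonempty β] (h : ∀ c b u w, ¬IsTwoK2 E c b u w) :
    ∃ w, ∀ a z, E a z → E a w := by
  obtain ⟨w, -, hmax⟩ := Set.Finite.exists_maximalFor (fun w : β => {a | E a w}) Set.univ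
    Set.finite_univ Set.univ_nonempty
  refine ⟨w, fun a z haz => by_contra fun haw => haw (hmax (Set.mem_univ z) ?_ haz)⟩
  exact fun y hyw => by_contra fun hyz => h y a w z ⟨hyw, haz, hyz, haw⟩

theorem decomposes_or_maxDegTwo_of_no_twoK2 [Finite β] (h : ∀ c b u w, ¬IsTwoK2 E c b u w) :
    Decomposes E ∨ MaxDegTwo E := by
  cases isEmpty_or_nonempty α
  · exact .inr ⟨isEmptyElim, fun c => by simp [Set.eq_empty_of_isEmpty]⟩
  cases isEmpty_or_nonempty β
  · exact .inr ⟨fun a => by simp [Set.eq_empty_of_isEmpty], isEmptyElim⟩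
  obtain ⟨w, hw⟩ := exists_white_nbhd_maximum h
  left
  by_cases huniv : ∀ a, E a w
  · exact ⟨Set.univ, {w}ᶜ, ⟨.inl Set.univ_nonempty, .inr ⟨w, not_not_intro rfl⟩⟩,
      .inr (.inr ⟨fun a _ z hz => not_not.1 hz ▸ huniv a, fun a ha => absurd trivial ha⟩)⟩
  · obtain ⟨b, hbw⟩ := not_forall.1 huniv
    refine ⟨{b}, ∅, ⟨.inl ⟨b, rfl⟩, .inr ⟨w, id⟩⟩, .inl fun a z haz => iff_of_false ?_ id⟩
    rintro rfl
    exact hbw (hw a z haz)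

theorem decomposes_or_maxDegTwo [Finite α] [Finite β] (hS : SkewStarFree E) (hT : NoTwins E) :
    Decomposes E ∨ MaxDegTwo E ∨ MaxDegTwo Eᶜ := by
  by_contra! ⟨hdec, hdeg, hdeg'⟩
  have h8 : NoEightPath E := fun a c =>
    ⟨fun h => (decomposes_or_maxDegTwo_of_eight_path hS hT h).elim hdec hdeg,
      fun h => (decomposes_or_maxDegTwo_of_eight_path hS.compl hT.compl h).elim
        (fun h => hdec h.of_compl) hdeg'⟩
  have h7 : NoSevenPath E :=
    ⟨fun a c h => (decomposes_or_maxDegTwo_of_seven_path hS h8 hT h).elim hdec hdeg,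
      fun c a h => (decomposes_or_maxDegTwo_of_seven_path hS.flip h8.flip hT.flip h).elim
        (fun h => hdec h.of_flip) fun h => hdeg h.of_flip⟩
  have hQ : NoPathAndEdge E := fun c b₁ b₂ w x₁ x₂ =>
    ⟨fun h => hdec (h.decomposes hS h7),
      fun h => hdec (h.decomposes hS.compl h7.compl).of_compl⟩
  exact (decomposes_or_maxDegTwo_of_no_twoK2
    fun c b u w h => hdec (h.decomposes hS hQ hT)).elim hdec hdeg

end BipRel

namespace BipGraph

/-! ### From relations to `BipGraph` -/

/-- The adjacency relation between the black and the white vertices of `G`. -/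
def rel (G : BipGraph V) (b : G.B) (w : G.W) : Prop :=
  (b.1, w.1) ∈ G.E

/-- The vertex set of `G` with black part `A` and white part `C`. -/
noncomputable def part (G : BipGraph V) (A : Set G.B) (C : Set G.W) : Finset V :=
  (Set.toFinite (Subtype.val '' A ∪ Subtype.val '' C)).toFinset

variable {G : BipGraph V} {A : Set G.B} {C : Set G.W}

theorem rel_bipCompl (G : BipGraph V) : (bipCompl G).rel = G.relᶜ :=
  funext₂ fun b w => propext ⟨fun h => h.2.2, fun h => ⟨b.2, w.2, h⟩⟩

theorem notMem_white {x : V} (hx : x ∈ G.B) : x ∉ G.W :=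
  Finset.disjoint_left.1 G.disj hx

theorem nbhd_black (b : G.B) : {y | Adjv G b y} = Subtype.val '' {w | G.rel b w} := by
  ext y
  constructor
  · rintro (h | h)
    · exact ⟨⟨y, (G.E_sub _ h).2⟩, h, rfl⟩
    · exact absurd (G.E_sub _ h).2 (notMem_white b.2)
  · rintro ⟨w, h, rfl⟩
    exact .inl h

theorem nbhd_white (w : G.W) : {y | Adjv G w y} = Subtype.val '' {b | G.rel b w} := by
  ext y
  constructor
  · rintro (h | h)
    · exact absurd w.2 (notMem_white (G.E_sub _ h).1)
    · exact ⟨⟨y, (G.E_sub _ h).1⟩, h, rfl⟩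
  · rintro ⟨b, h, rfl⟩
    exact .inr h

theorem adjv_black_iff (b : G.B) (y : V) : Adjv G b y ↔ ∃ w, G.rel b w ∧ w.1 = y :=
  Set.ext_iff.1 (nbhd_black b) y

theorem adjv_white_iff (w : G.W) (y : V) : Adjv G w y ↔ ∃ b, G.rel b w ∧ b.1 = y :=
  Set.ext_iff.1 (nbhd_white w) y

theorem adjv_black_white (b : G.B) (w : G.W) : Adjv G b w ↔ G.rel b w := by
  simp [adjv_black_iff]

theorem adjv_white_black (b : G.B) (w : G.W) : Adjv G w b ↔ G.rel b w := by
  simp [adjv_white_iff]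

theorem not_adjv_black_black (b b' : G.B) : ¬Adjv G b b' := by
  rw [adjv_black_iff]
  rintro ⟨w, -, hw⟩
  exact notMem_white b'.2 (hw ▸ w.2)

theorem not_adjv_white_white (w w' : G.W) : ¬Adjv G w w' := by
  rw [adjv_white_iff]
  rintro ⟨b, -, hb⟩
  exact notMem_white b.2 (hb ▸ w'.2)

theorem noTwins_rel (h : TwinFree G) : BipRel.NoTwins G.rel := by
  refine ⟨fun b b' hbb' => ?_, fun w w' hww' => ?_⟩ <;> apply Subtype.ext
  · refine h _ (mem_union_left _ b.2) _ (mem_union_left _ b'.2) ?_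
    rw [nbhd_black, nbhd_black, hbb']
  · refine h _ (mem_union_right _ w.2) _ (mem_union_right _ w'.2) ?_
    rw [nbhd_white, nbhd_white]
    exact congrArg (fun s : Set G.B => Subtype.val '' s) hww'

theorem maxDeg2_of_maxDegTwo_rel (h : BipRel.MaxDegTwo G.rel) : MaxDeg2 G := by
  intro x hx
  refine ENat.toNat_le_of_le_natCast ?_
  obtain hx | hx := Finset.mem_union.1 hx
  · rw [nbhd_black ⟨x, hx⟩, Subtype.val_injective.encard_image]
    exact h.1 ⟨x, hx⟩
  · rw [nbhd_white ⟨x, hx⟩, Subtype.val_injective.encard_image]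
    exact h.2 ⟨x, hx⟩

theorem not_star_embedding (h : Star123Free G) {v : Fin 7 → V} (hmem : ∀ i, v i ∈ G.B ∪ G.W) :
    ¬∀ i j : Fin 7, Adjv G (v i) (v j) ↔
      (((i : ℕ), (j : ℕ)) ∈ starEdges ∨ ((j : ℕ), (i : ℕ)) ∈ starEdges) := by
  intro hadj
  have hstar_twinFree : ∀ i j : Fin 7, (∀ k : Fin 7,
      (((i : ℕ), (k : ℕ)) ∈ starEdges ∨ ((k : ℕ), (i : ℕ)) ∈ starEdges) ↔
      (((j : ℕ), (k : ℕ)) ∈ starEdges ∨ ((k : ℕ), (j : ℕ)) ∈ starEdges)) → i = j := by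
    unfold starEdges
    decide
  exact h ⟨v, fun i j hij => hstar_twinFree i j fun k => by rw [← hadj, ← hadj, hij], hmem, hadj⟩

theorem skewStarFree_rel (h : Star123Free G) : BipRel.SkewStarFree G.rel := by
  refine ⟨fun v₁ v₂ v₃ v₄ v₅ v₆ v₇ hstar => ?_, fun v₁ v₂ v₃ v₄ v₅ v₆ v₇ hstar => ?_⟩ <;>
  · simp only [BipRel.IsSkewStar, flip] at hstar
    refine not_star_embedding h (v := ![v₁, v₂, v₃, v₄, v₅, v₆, v₇]) ?_ ?_
    · simp [Fin.forall_fin_succ]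
    · simp [Fin.forall_fin_succ, starEdges, adjv_black_white, adjv_white_black,
        not_adjv_black_black, not_adjv_white_white, hstar]

theorem black_mem_part (b : G.B) : b.1 ∈ G.part A C ↔ b ∈ A := by
  have hW : b.1 ∉ Subtype.val '' C := fun ⟨w, _, hw⟩ => notMem_white b.2 (hw ▸ w.2)
  simp [part, hW]

theorem white_mem_part (w : G.W) : w.1 ∈ G.part A C ↔ w ∈ C := by
  have hB : w.1 ∉ Subtype.val '' A := fun ⟨b, _, hb⟩ => notMem_white b.2 (hb ▸ w.2)
  simp [part, hB]

theorem part_nonempty (h : A.Nonempty ∨ C.Nonempty) : (G.part A C).Nonempty :=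
  h.elim (fun ⟨b, hb⟩ => ⟨b, (black_mem_part b).2 hb⟩) fun ⟨w, hw⟩ => ⟨w, (white_mem_part w).2 hw⟩

theorem part_subset (G : BipGraph V) (A : Set G.B) (C : Set G.W) : G.part A C ⊆ G.B ∪ G.W := by
  intro x hx
  simp only [part, Set.Finite.mem_toFinset] at hx
  obtain ⟨b, -, rfl⟩ | ⟨w, -, rfl⟩ := hx
  · exact mem_union_left _ b.2
  · exact mem_union_right _ w.2

theorem part_compl (G : BipGraph V) (A : Set G.B) (C : Set G.W) :
    G.part Aᶜ Cᶜ = (G.B ∪ G.W) \ G.part A C := by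
  ext x
  by_cases hx : x ∈ G.B ∪ G.W
  · simp only [mem_sdiff, hx, true_and]
    obtain hB | hW := Finset.mem_union.1 hx
    · rw [black_mem_part ⟨x, hB⟩, black_mem_part ⟨x, hB⟩, Set.mem_compl_iff]
    · rw [white_mem_part ⟨x, hW⟩, white_mem_part ⟨x, hW⟩, Set.mem_compl_iff]
  · simp only [mem_sdiff, hx, false_and, iff_false]
    exact fun h => hx (G.part_subset Aᶜ Cᶜ h)

theorem disjoint_part_compl (G : BipGraph V) (A : Set G.B) (C : Set G.W) :
    Disjoint (G.part A C) (G.part Aᶜ Cᶜ) :=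
  part_compl G A C ▸ disjoint_sdiff

theorem part_union_part_compl (G : BipGraph V) (A : Set G.B) (C : Set G.W) :
    G.part A C ∪ G.part Aᶜ Cᶜ = G.B ∪ G.W := by
  rw [part_compl, union_sdiff_of_subset (G.part_subset A C)]

theorem forall_mem_part_inter_black {P : V → Prop} :
    (∀ x ∈ G.part A C ∩ G.B, P x) ↔ ∀ b ∈ A, P b.1 := by
  simp only [mem_inter]
  exact ⟨fun h b hb => h b ⟨(black_mem_part b).2 hb, b.2⟩,
    fun h x hx => h ⟨x, hx.2⟩ ((black_mem_part _).1 hx.1)⟩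

theorem forall_mem_part_inter_white {P : V → Prop} :
    (∀ x ∈ G.part A C ∩ G.W, P x) ↔ ∀ w ∈ C, P w.1 := by
  simp only [mem_inter]
  exact ⟨fun h w hw => h w ⟨(white_mem_part w).2 hw, w.2⟩,
    fun h x hx => h ⟨x, hx.2⟩ ((white_mem_part _).1 hx.1)⟩

theorem nonadj_part (h : BipRel.IsParallelPart G.rel A C) :
    Nonadj G (G.part A C) (G.part Aᶜ Cᶜ) := by
  have hmem_iff : ∀ x y, (x, y) ∈ G.E → (x ∈ G.part A C ↔ y ∈ G.part A C) := fun x y hxy => by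
    obtain ⟨hx, hy⟩ := G.E_sub _ hxy
    rw [black_mem_part ⟨x, hx⟩, white_mem_part ⟨y, hy⟩]
    exact h ⟨x, hx⟩ ⟨y, hy⟩ hxy
  rw [part_compl]
  exact fun x hx y hy => ⟨fun hxy => (mem_sdiff.1 hy).2 ((hmem_iff x y hxy).1 hx),
    fun hyx => (mem_sdiff.1 hy).2 ((hmem_iff y x hyx).2 hx)⟩

theorem fullyAdj_part (h : BipRel.IsParallelPart G.relᶜ A C) :
    FullyAdj G (G.part A C) (G.part Aᶜ Cᶜ) := by
  simp only [FullyAdj, forall_mem_part_inter_black, forall_mem_part_inter_white]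
  exact ⟨fun b hb w hw => by_contra fun hbw => hw ((h b w hbw).1 hb),
    fun b hb w hw => by_contra fun hbw => hb ((h b w hbw).2 hw)⟩

theorem leftAdj_part (h : BipRel.IsLeftPart G.rel A C) :
    LeftAdj G (G.part A C) (G.part Aᶜ Cᶜ) := by
  simp only [LeftAdj, forall_mem_part_inter_black, forall_mem_part_inter_white]
  exact h

end BipGraph

/-- Lozin's theorem, Theorem 1 of the paper. -/
theorem lozin_decomposition {V : Type} [DecidableEq V] (G : BipGraph V)
    (htwin : TwinFree G) (hstar : Star123Free G) :
    (∃ X Y : Finset V, X.Nonempty ∧ Y.Nonempty ∧ Disjoint X Y ∧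
        X ∪ Y = G.B ∪ G.W ∧ Nonadj G X Y) ∨
    (∃ X Y : Finset V, X.Nonempty ∧ Y.Nonempty ∧ Disjoint X Y ∧
        X ∪ Y = G.B ∪ G.W ∧ FullyAdj G X Y) ∨
    (∃ X Y : Finset V, X.Nonempty ∧ Y.Nonempty ∧ Disjoint X Y ∧
        X ∪ Y = G.B ∪ G.W ∧ LeftAdj G X Y) ∨
    MaxDeg2 G ∨ MaxDeg2 (bipCompl G) := by
  obtain ⟨A, C, hproper, h⟩ | h | h := BipRel.decomposes_or_maxDegTwo
    (BipGraph.skewStarFree_rel hstar) (BipGraph.noTwins_rel htwin)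
  · have hX := BipGraph.part_nonempty hproper.1
    have hY := BipGraph.part_nonempty hproper.2
    have hdisj := G.disjoint_part_compl A C
    have hunion := G.part_union_part_compl A C
    obtain h | h | h := h
    · exact .inl ⟨_, _, hX, hY, hdisj, hunion, BipGraph.nonadj_part h⟩
    · exact .inr (.inl ⟨_, _, hX, hY, hdisj, hunion, BipGraph.fullyAdj_part h⟩)
    · exact .inr (.inr (.inl ⟨_, _, hX, hY, hdisj, hunion, BipGraph.leftAdj_part h⟩))
  · exact .inr (.inr (.inr (.inl (BipGraph.maxDeg2_of_maxDegTwo_rel h))))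
  · rw [← BipGraph.rel_bipCompl] at h
    exact .inr (.inr (.inr (.inr (BipGraph.maxDeg2_of_maxDegTwo_rel h))))
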